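/- arXiv:1503.03631 — 8 statements merged into one kernel-verified Lean document; each statement's English description precedes it below -/
import Mathlib

section
/- Let (X, λ) be a measure space, let ν be a Young measure on X, let p ∈ (1, ∞), and suppose M := ∫_X ∫_ℝ |ζ|^p dν_z(ζ) dλ(z) < ∞. Let f(z, ξ) = ν_z((ξ, ∞)) and χ_f(z, ξ) = f(z, ξ) − 1_{ξ<0}. Then for every measurable set E ⊆ X with λ(E) < ∞, ∫_E ∫_ℝ |χ_f(z, ξ)| dξ dλ(z) ≤ (∫_ℝ (1 + |ξ|^p)^{−1} dξ) · (λ(E) + M) < ∞; in particular χ_f is integrable on E × ℝ. -/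
open MeasureTheory ProbabilityTheory
open scoped ENNReal

lemma aux_bound (μ : Measure ℝ) [IsProbabilityMeasure μ] (p : ℝ) (hp : 1 < p) (ξ : ℝ) :
    ENNReal.ofReal |(μ (Set.Ioi ξ)).toReal - (Set.Iio (0 : ℝ)).indicator (fun _ => (1 : ℝ)) ξ|
      ≤ ENNReal.ofReal ((1 + |ξ| ^ p)⁻¹) * (1 + ∫⁻ ζ, ENNReal.ofReal (|ζ| ^ p) ∂μ) := by
  have hm : Measurable (fun ζ : ℝ => ENNReal.ofReal (|ζ| ^ p)) := by fun_prop
  have h0 : 0 ≤ |ξ| ^ p := by positivity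
  have key : ENNReal.ofReal |(μ (Set.Ioi ξ)).toReal
      - (Set.Iio (0 : ℝ)).indicator (fun _ => (1 : ℝ)) ξ| ≤ μ {ζ | |ξ| ≤ |ζ|} := by
    by_cases h : ξ < 0
    · have h1 : (μ (Set.Ioi ξ)).toReal = 1 - (μ (Set.Iic ξ)).toReal := by
        have := probReal_compl_eq_one_sub (μ := μ) (measurableSet_Iic (a := ξ))
        rwa [Set.compl_Iic] at this
      rw [Set.indicator_of_mem (by exact h), h1, sub_sub_cancel_left, abs_neg,
        abs_of_nonneg ENNReal.toReal_nonneg, ENNReal.ofReal_toReal (measure_ne_top _ _)]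
      apply measure_mono
      intro ζ hζ
      have hζ' : ζ ≤ ξ := hζ
      show |ξ| ≤ |ζ|
      rw [abs_of_neg h, abs_of_neg (by linarith)]
      linarith
    · rw [Set.indicator_of_notMem (by exact h), sub_zero,
        abs_of_nonneg ENNReal.toReal_nonneg, ENNReal.ofReal_toReal (measure_ne_top _ _)]
      apply measure_mono
      intro ζ hζ
      have hζ' : ξ < ζ := hζ
      show |ξ| ≤ |ζ|
      rw [abs_of_nonneg (by linarith), abs_of_nonneg (by linarith)]
      linarith
  have h2 : ENNReal.ofReal (1 + |ξ| ^ p) * μ {ζ | |ξ| ≤ |ζ|}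
      ≤ 1 + ∫⁻ ζ, ENNReal.ofReal (|ζ| ^ p) ∂μ := by
    have e : 1 + ∫⁻ ζ, ENNReal.ofReal (|ζ| ^ p) ∂μ
        = ∫⁻ ζ, (1 + ENNReal.ofReal (|ζ| ^ p)) ∂μ := by
      rw [lintegral_add_left measurable_const]; simp
    rw [e]
    refine le_trans ?_ (mul_meas_ge_le_lintegral (measurable_const.add hm)
      (ENNReal.ofReal (1 + |ξ| ^ p)))
    refine mul_le_mul_right (measure_mono fun ζ hζ => ?_) _
    have hζ' : |ξ| ≤ |ζ| := hζ
    show ENNReal.ofReal (1 + |ξ| ^ p) ≤ 1 + ENNReal.ofReal (|ζ| ^ p)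
    rw [ENNReal.ofReal_add zero_le_one h0, ENNReal.ofReal_one]
    gcongr
  refine key.trans ?_
  rw [ENNReal.ofReal_inv_of_pos (by positivity), mul_comm, ← div_eq_mul_inv]
  rw [ENNReal.le_div_iff_mul_le (Or.inl (by simp; positivity)) (Or.inl ENNReal.ofReal_ne_top), mul_comm]
  exact h2

lemma aux_fin (p : ℝ) (hp : 1 < p) : (∫⁻ ξ : ℝ, ENNReal.ofReal ((1 + |ξ| ^ p)⁻¹)) < ⊤ := by
  have h := finite_integral_one_add_norm (E := ℝ) (μ := volume) (r := p) (by simpa using hp)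
  have h3 : ∫⁻ ξ : ℝ, ENNReal.ofReal (2 ^ p) * ENNReal.ofReal ((1 + ‖ξ‖) ^ (-p)) < ⊤ := by
    rw [lintegral_const_mul _ (by fun_prop)]
    exact ENNReal.mul_lt_top ENNReal.ofReal_lt_top h
  refine lt_of_le_of_lt (lintegral_mono fun ξ => ?_) h3
  rw [← ENNReal.ofReal_mul (by positivity)]
  apply ENNReal.ofReal_le_ofReal
  rw [Real.norm_eq_abs, Real.rpow_neg (by positivity), ← div_eq_mul_inv, inv_eq_one_div,
    div_le_div_iff₀ (by positivity) (by positivity), one_mul]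
  have h0 : 0 ≤ |ξ| ^ p := by positivity
  have hx := abs_nonneg ξ
  rcases le_total |ξ| 1 with h1 | h1
  · calc (1 + |ξ|) ^ p ≤ 2 ^ p := Real.rpow_le_rpow (by positivity) (by linarith) (by linarith)
      _ ≤ 2 ^ p * (1 + |ξ| ^ p) := le_mul_of_one_le_right (by positivity) (by linarith)
  · calc (1 + |ξ|) ^ p ≤ (2 * |ξ|) ^ p :=
          Real.rpow_le_rpow (by positivity) (by linarith) (by linarith)
      _ = 2 ^ p * |ξ| ^ p := Real.mul_rpow (by norm_num) hx
      _ ≤ 2 ^ p * (1 + |ξ| ^ p) := by gcongr; linarith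

lemma aux_meas {X : Type*} [MeasurableSpace X] (nu : Kernel X ℝ) [IsMarkovKernel nu] :
    Measurable (fun q : X × ℝ =>
      (nu q.1 (Set.Ioi q.2)).toReal - (Set.Iio (0 : ℝ)).indicator (fun _ => (1 : ℝ)) q.2) := by
  have hi : Measurable ((Set.Iio (0 : ℝ)).indicator (fun _ => (1 : ℝ))) :=
    measurable_const.indicator measurableSet_Iio
  have ht : MeasurableSet {r : (X × ℝ) × ℝ | r.1.2 < r.2} :=
    measurableSet_lt (by fun_prop) (by fun_prop)
  have h := Kernel.measurable_kernel_prodMk_left (κ := nu.comap Prod.fst measurable_fst) ht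
  have h' : Measurable (fun q : X × ℝ => nu q.1 (Set.Ioi q.2)) := h
  exact h'.ennreal_toReal.sub (hi.comp measurable_snd)

/-- For a Young measure `ν` with finite `p`-moment `M` (`p > 1`), the modified kinetic
function `χ_f(z, ξ) = ν_z((ξ,∞)) - 1_{ξ<0}` satisfies
`∫_E ∫_ℝ |χ_f| dξ dλ ≤ (∫_ℝ (1+|ξ|^p)⁻¹ dξ) (λ(E) + M) < ∞` for every measurable `E` of
finite measure; in particular `χ_f` is integrable on `E × ℝ`. -/
theorem chi_integrable_on_finite_measure_sets {X : Type*} [MeasurableSpace X] (lam : Measure X)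
    (nu : Kernel X ℝ) [IsMarkovKernel nu] (p : ℝ) (hp : 1 < p)
    (M : ℝ≥0∞) (hM : M = ∫⁻ z, ∫⁻ ζ, ENNReal.ofReal (|ζ| ^ p) ∂(nu z) ∂lam) (hMfin : M < ⊤)
    (E : Set X) (hE : MeasurableSet E) (hEfin : lam E < ⊤) :
    (∫⁻ z in E, (∫⁻ ξ : ℝ, ENNReal.ofReal
          |(nu z (Set.Ioi ξ)).toReal - (Set.Iio (0 : ℝ)).indicator (fun _ => (1 : ℝ)) ξ|) ∂lam)
        ≤ (∫⁻ ξ : ℝ, ENNReal.ofReal ((1 + |ξ| ^ p)⁻¹)) * (lam E + M) ∧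
      (∫⁻ z in E, (∫⁻ ξ : ℝ, ENNReal.ofReal
          |(nu z (Set.Ioi ξ)).toReal - (Set.Iio (0 : ℝ)).indicator (fun _ => (1 : ℝ)) ξ|) ∂lam)
        < ⊤ ∧
      Integrable
        (fun q : X × ℝ =>
          (nu q.1 (Set.Ioi q.2)).toReal - (Set.Iio (0 : ℝ)).indicator (fun _ => (1 : ℝ)) q.2)
        ((lam.restrict E).prod volume) := by
  have hm : Measurable (fun ζ : ℝ => ENNReal.ofReal (|ζ| ^ p)) := by fun_prop
  have A : (∫⁻ z in E, (∫⁻ ξ : ℝ, ENNReal.ofReal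
          |(nu z (Set.Ioi ξ)).toReal - (Set.Iio (0 : ℝ)).indicator (fun _ => (1 : ℝ)) ξ|) ∂lam)
        ≤ (∫⁻ ξ : ℝ, ENNReal.ofReal ((1 + |ξ| ^ p)⁻¹)) * (lam E + M) := by
    calc _ ≤ ∫⁻ z in E, (∫⁻ ξ : ℝ, ENNReal.ofReal ((1 + |ξ| ^ p)⁻¹)
            * (1 + ∫⁻ ζ, ENNReal.ofReal (|ζ| ^ p) ∂(nu z))) ∂lam :=
          lintegral_mono fun z => lintegral_mono fun ξ => aux_bound (nu z) p hp ξ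
      _ = ∫⁻ z in E, (∫⁻ ξ : ℝ, ENNReal.ofReal ((1 + |ξ| ^ p)⁻¹))
            * (1 + ∫⁻ ζ, ENNReal.ofReal (|ζ| ^ p) ∂(nu z)) ∂lam := by
          congr 1; ext z
          rw [lintegral_mul_const _ (by fun_prop)]
      _ = (∫⁻ ξ : ℝ, ENNReal.ofReal ((1 + |ξ| ^ p)⁻¹))
            * (lam E + ∫⁻ z in E, ∫⁻ ζ, ENNReal.ofReal (|ζ| ^ p) ∂(nu z) ∂lam) := by
          rw [lintegral_const_mul _ (by exact measurable_const.add hm.lintegral_kernel),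
            lintegral_add_left measurable_const]
          simp
      _ ≤ _ := by
          rw [hM]
          gcongr
          exact Measure.restrict_le_self
  have B := A.trans_lt (ENNReal.mul_lt_top (aux_fin p hp) (ENNReal.add_lt_top.2 ⟨hEfin, hMfin⟩))
  refine ⟨A, B, (aux_meas nu).aestronglyMeasurable, ?_⟩
  rw [hasFiniteIntegral_iff_norm, lintegral_prod _ (by
    exact (aux_meas nu).norm.ennreal_ofReal.aemeasurable)]
  exact B
end

section
/- (Compactness of Young measures, first part.) Let (X, λ) be a σ-finite measure space such that L¹(X, λ) is separable. Let (ν^n)_{n∈ℕ} be a sequence of Young measures on X such that for some p ∈ [1, ∞), sup_{n∈ℕ} ∫_X ∫_ℝ |ξ|^p dν^n_z(ξ) dλ(z) < ∞. Then there exist a Young measure ν on X and a strictly increasing sequence (n_k) of natural numbers such that for every λ-integrable h : X → ℝ and every bounded continuous φ : ℝ → ℝ, ∫_X h(z) ∫_ℝ φ(ξ) dν^{n_k}_z(ξ) dλ(z) → ∫_X h(z) ∫_ℝ φ(ξ) dν_z(ξ) dλ(z) as k → ∞. -/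
open MeasureTheory ProbabilityTheory Filter
open scoped ENNReal

lemma ym_weight {X : Type*} [MeasurableSpace X] (lam : Measure X)
    [SigmaFinite lam] (h0 : lam ≠ 0) :
    ∃ (w : X → NNReal) (M : NNReal), Measurable w ∧ (∀ x, 0 < w x) ∧ (∀ x, w x ≤ M) ∧
      IsProbabilityMeasure (lam.withDensity (fun x => (w x : ℝ≥0∞))) := by
  obtain ⟨g, gpos, gm, gi⟩ := exists_pos_lintegral_lt_of_sigmaFinite lam one_ne_zero
  set v : X → NNReal := fun x => min (g x) 1 with hv
  have vm : Measurable v := gm.min measurable_const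
  have vpos : ∀ x, 0 < v x := fun x => lt_min (gpos x) one_pos
  have vi : ∫⁻ x, v x ∂lam < 1 := lt_of_le_of_lt
    (lintegral_mono fun x => by simp only [ENNReal.coe_le_coe]; exact min_le_left _ _) gi
  have vn : ∫⁻ x, v x ∂lam ≠ 0 := by
    intro h
    rw [lintegral_eq_zero_iff (by fun_prop)] at h
    apply h0
    rw [← Measure.measure_univ_eq_zero]
    refine measure_mono_null ?_ h
    intro x _
    have := (vpos x).ne'
    simpa using this
  set c : NNReal := (∫⁻ x, v x ∂lam).toNNReal with hc
  have hcc : (c : ℝ≥0∞) = ∫⁻ x, v x ∂lam := ENNReal.coe_toNNReal (vi.trans ENNReal.one_lt_top).ne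
  have c0 : c ≠ 0 := by
    intro h; rw [h] at hcc; exact vn (by simpa using hcc.symm)
  refine ⟨fun x => c⁻¹ * v x, c⁻¹, by fun_prop, fun x => mul_pos (by positivity) (vpos x),
    fun x => ?_, ⟨?_⟩⟩
  · exact mul_le_of_le_one_right (by positivity) (min_le_right _ _)
  · rw [withDensity_apply _ MeasurableSet.univ]
    simp only [ENNReal.coe_mul, Measure.restrict_univ]
    rw [lintegral_const_mul _ (by fun_prop), ← hcc, ← ENNReal.coe_mul, inv_mul_cancel₀ c0]
    rfl

lemma ym_prob {X : Type*} [MeasurableSpace X] (m : Measure X) [IsProbabilityMeasure m]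
    (f : X → (ℕ → ℝ)) (hf : Measurable f)
    (nu : ℕ → Kernel X ℝ) [∀ n, IsMarkovKernel (nu n)]
    (p : ℝ) (hp : 1 ≤ p) (C : ℝ≥0∞) (hC : C < ⊤)
    (hb : ∀ n, (∫⁻ z, (∫⁻ ξ, ENNReal.ofReal (|ξ| ^ p) ∂(nu n z)) ∂m) ≤ C) :
    ∃ κ : Kernel (ℕ → ℝ) ℝ, IsMarkovKernel κ ∧ ∃ nk : ℕ → ℕ, StrictMono nk ∧
      ∀ (g : BoundedContinuousFunction (ℕ → ℝ) ℝ) (φ : BoundedContinuousFunction ℝ ℝ),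
        Tendsto (fun k => ∫ z, g (f z) * (∫ ξ, φ ξ ∂(nu (nk k) z)) ∂m) atTop
          (nhds (∫ z, g (f z) * (∫ ξ, φ ξ ∂(κ (f z))) ∂m)) := by
  have hF : Measurable (Prod.map f id : X × ℝ → (ℕ → ℝ) × ℝ) := hf.prodMap measurable_id
  let μ : ℕ → ProbabilityMeasure ((ℕ → ℝ) × ℝ) := fun n =>
    ⟨(m ⊗ₘ nu n).map (Prod.map f id), Measure.isProbabilityMeasure_map hF.aemeasurable⟩
  have hμ : ∀ n, (μ n : Measure ((ℕ → ℝ) × ℝ)) = (m ⊗ₘ nu n).map (Prod.map f id) := fun n => rfl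
  have hfst : ∀ n, (μ n : Measure ((ℕ → ℝ) × ℝ)).map Prod.fst = m.map f := by
    intro n
    rw [hμ, Measure.map_map measurable_fst hF]
    have : (Prod.fst ∘ Prod.map f id : X × ℝ → (ℕ → ℝ)) = f ∘ Prod.fst := rfl
    rw [this, ← Measure.map_map hf measurable_fst]
    congr 1
    exact Measure.fst_compProd m (nu n)
  have : IsProbabilityMeasure (m.map f) := Measure.isProbabilityMeasure_map hf.aemeasurable
  have tight : IsTightMeasureSet {((ρ : ProbabilityMeasure ((ℕ → ℝ) × ℝ)) :
      Measure ((ℕ → ℝ) × ℝ)) | ρ ∈ Set.range μ} := by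
    rw [isTightMeasureSet_iff_exists_isCompact_measure_compl_le]
    intro ε hε
    have t1 : IsTightMeasureSet {m.map f} := isTightMeasureSet_singleton
    rw [isTightMeasureSet_iff_exists_isCompact_measure_compl_le] at t1
    have hε2 : 0 < ε / 2 := ENNReal.half_pos hε.ne'
    obtain ⟨K, hK, hKm⟩ := t1 (ε / 2) hε2
    have hlim : Tendsto (fun n : ℕ => C / (n : ℝ≥0∞)) atTop (nhds (C / ⊤)) :=
      ENNReal.Tendsto.const_div ENNReal.tendsto_nat_nhds_top (Or.inr hC.ne)
    rw [ENNReal.div_top] at hlim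
    obtain ⟨N, hN, hN1⟩ := ((hlim.eventually (ge_mem_nhds hε2)).and (eventually_ge_atTop 1)).exists
    refine ⟨K ×ˢ Set.Icc (-(N:ℝ)) N, hK.prod isCompact_Icc, ?_⟩
    rintro _ ⟨_, ⟨n, rfl⟩, rfl⟩
    have hsub : (K ×ˢ Set.Icc (-(N:ℝ)) N)ᶜ ⊆ (Prod.fst ⁻¹' Kᶜ) ∪
        {x : (ℕ → ℝ) × ℝ | (N : ℝ≥0∞) ≤ ENNReal.ofReal (|x.2| ^ p)} := by
      rintro ⟨a, ξ⟩ h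
      by_cases ha : a ∈ K
      · right
        have h1 : ¬ |ξ| ≤ N := by
          intro h2
          exact h ⟨ha, abs_le.1 h2⟩
        have hN1' : (1:ℝ) ≤ N := by exact_mod_cast hN1
        have h3 : (N:ℝ) ≤ |ξ| ^ p := by
          calc (N:ℝ) ≤ |ξ| := (not_le.1 h1).le
            _ = |ξ| ^ (1:ℝ) := (Real.rpow_one _).symm
            _ ≤ |ξ| ^ p := Real.rpow_le_rpow_of_exponent_le (by linarith) hp
        simp only [Set.mem_ofPred_eq]
        rw [← ENNReal.ofReal_natCast]
        exact ENNReal.ofReal_le_ofReal h3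
      · left; exact ha
    refine (measure_mono hsub).trans ((measure_union_le _ _).trans ?_)
    rw [← ENNReal.add_halves ε]
    refine add_le_add ?_ ?_
    · have : (μ n : Measure ((ℕ → ℝ) × ℝ)) (Prod.fst ⁻¹' Kᶜ) = (m.map f) Kᶜ := by
        rw [← hfst n, Measure.map_apply measurable_fst hK.measurableSet.compl]
      rw [this]
      exact hKm _ rfl
    · have hmeas : Measurable (fun x : (ℕ → ℝ) × ℝ => ENNReal.ofReal (|x.2| ^ p)) := by fun_prop
      refine (meas_ge_le_lintegral_div hmeas.aemeasurable (by simp; omega) (by simp)).trans ?_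
      refine le_trans ?_ hN
      gcongr
      rw [hμ, lintegral_map hmeas hF, Measure.lintegral_compProd (by fun_prop)]
      exact hb n
  have hcomp := isCompact_closure_of_isTightMeasureSet tight
  obtain ⟨ρ, -, nk, hnk, hlim⟩ := hcomp.tendsto_subseq (x := μ)
    (fun n => subset_closure (Set.mem_range_self n))
  rw [ProbabilityMeasure.tendsto_iff_forall_integral_tendsto] at hlim
  have hρ : (ρ : Measure ((ℕ → ℝ) × ℝ)).fst = m.map f := by
    have : IsFiniteMeasure ((ρ : Measure ((ℕ → ℝ) × ℝ)).fst) := inferInstance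
    refine ext_of_forall_integral_eq_of_IsFiniteMeasure fun g => ?_
    have h1 := hlim (g.compContinuous ⟨Prod.fst, continuous_fst⟩)
    refine tendsto_nhds_unique (f := fun _ : ℕ => ∫ x, g x ∂(m.map f)) (l := atTop) ?_
      tendsto_const_nhds
    have e1 : ∀ σ : Measure ((ℕ → ℝ) × ℝ),
        ∫ x, (g.compContinuous ⟨Prod.fst, continuous_fst⟩) x ∂σ = ∫ x, g x ∂(σ.map Prod.fst) := by
      intro σ
      rw [integral_map measurable_fst.aemeasurable g.continuous.aestronglyMeasurable]
      rfl
    simp only [e1, Function.comp, hfst] at h1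
    exact h1
  refine ⟨(ρ : Measure ((ℕ → ℝ) × ℝ)).condKernel, inferInstance, nk, hnk, fun g φ => ?_⟩
  have h1 := hlim (g.compContinuous ⟨Prod.fst, continuous_fst⟩ *
    φ.compContinuous ⟨Prod.snd, continuous_snd⟩)
  have e2 : ∫ x, (g.compContinuous ⟨Prod.fst, continuous_fst⟩ *
      φ.compContinuous ⟨Prod.snd, continuous_snd⟩ :
        BoundedContinuousFunction ((ℕ → ℝ) × ℝ) ℝ) x ∂(ρ : Measure ((ℕ → ℝ) × ℝ))
      = ∫ z, g (f z) * (∫ ξ, φ ξ ∂((ρ : Measure ((ℕ → ℝ) × ℝ)).condKernel (f z))) ∂m := by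
    rw [← Measure.integral_condKernel (BoundedContinuousFunction.integrable _ _), hρ,
      integral_map hf.aemeasurable]
    · simp [integral_const_mul]
    · rw [← hρ]
      exact AEStronglyMeasurable.integral_condKernel
        (BoundedContinuousFunction.integrable _ _).aestronglyMeasurable
  rw [e2] at h1
  refine h1.congr fun k => ?_
  simp only [Function.comp, hμ]
  rw [integral_map hF.aemeasurable (BoundedContinuousFunction.continuous _).aestronglyMeasurable,
    Measure.integral_compProd]
  · simp [integral_const_mul]
  · exact (integrable_map_measure
      (BoundedContinuousFunction.continuous _).aestronglyMeasurable hF.aemeasurable).1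
      (BoundedContinuousFunction.integrable _ _)

lemma ym_dense {X : Type*} [MeasurableSpace X] (lam : Measure X)
    [TopologicalSpace.SeparableSpace (Lp ℝ 1 lam)] :
    ∃ u : ℕ → X → ℝ, (∀ i, Measurable (u i)) ∧ (∀ i, Integrable (u i) lam) ∧
      ∀ h : X → ℝ, Integrable h lam → ∀ ε > 0, ∃ i, ∫ z, |h z - u i z| ∂lam < ε := by
  let d := TopologicalSpace.denseSeq (Lp ℝ 1 lam)
  have hd := TopologicalSpace.denseRange_denseSeq (Lp ℝ 1 lam)
  refine ⟨fun i => d i, fun i => (Lp.stronglyMeasurable (d i)).measurable,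
    fun i => L1.integrable_coeFn (d i), fun h hh ε hε => ?_⟩
  obtain ⟨i, hi⟩ := Metric.denseRange_iff.1 hd (hh.toL1 h) ε hε
  refine ⟨i, ?_⟩
  rw [dist_eq_norm, L1.norm_eq_integral_norm] at hi
  refine lt_of_eq_of_lt (integral_congr_ae ?_) hi
  filter_upwards [Lp.coeFn_sub (hh.toL1 h) (d i), hh.coeFn_toL1] with z h1 h2
  rw [h1, Pi.sub_apply, h2, Real.norm_eq_abs]

lemma ym_avg {X : Type*} [MeasurableSpace X] {lam : Measure X} (κ : Kernel X ℝ)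
    [IsMarkovKernel κ] (φ : BoundedContinuousFunction ℝ ℝ) :
    AEStronglyMeasurable (fun z => ∫ ξ, φ ξ ∂(κ z)) lam ∧
      ∀ z, |∫ ξ, φ ξ ∂(κ z)| ≤ ‖φ‖ := by
  refine ⟨?_, fun z => ?_⟩
  · exact (StronglyMeasurable.integral_kernel
      (φ.continuous.stronglyMeasurable)).aestronglyMeasurable
  · have := norm_integral_le_of_norm_le_const (μ := κ z) (ae_of_all _ φ.norm_coe_le_norm)
    simpa using this

theorem youngMeasure_compactness_narrow {X : Type*} [MeasurableSpace X] (lam : Measure X)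
    [SigmaFinite lam] [TopologicalSpace.SeparableSpace (Lp ℝ 1 lam)]
    (nu : ℕ → Kernel X ℝ) [∀ n, IsMarkovKernel (nu n)]
    (p : ℝ) (hp : 1 ≤ p)
    (hbound : ∃ C : ℝ≥0∞, C < ⊤ ∧
      ∀ n, (∫⁻ z, (∫⁻ ξ, ENNReal.ofReal (|ξ| ^ p) ∂(nu n z)) ∂lam) ≤ C) :
    ∃ nulim : Kernel X ℝ, IsMarkovKernel nulim ∧
      ∃ nk : ℕ → ℕ, StrictMono nk ∧
        ∀ h : X → ℝ, Integrable h lam →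
          ∀ φ : ℝ → ℝ, Continuous φ → (∃ B : ℝ, ∀ x, |φ x| ≤ B) →
            Tendsto (fun k => ∫ z, h z * (∫ ξ, φ ξ ∂(nu (nk k) z)) ∂lam) atTop
              (nhds (∫ z, h z * (∫ ξ, φ ξ ∂(nulim z)) ∂lam)) := by
  by_cases h0 : lam = 0
  · subst h0
    exact ⟨nu 0, inferInstance, id, strictMono_id, fun h _ φ _ _ => by simp⟩
  obtain ⟨w, M, wm, wpos, wM, hprob⟩ := ym_weight lam h0
  obtain ⟨u, um, ui, hu⟩ := ym_dense lam
  obtain ⟨C, hC, hb⟩ := hbound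
  set m := lam.withDensity (fun x => (w x : ℝ≥0∞)) with hm
  let f : X → ℕ → ℝ := fun z i => u i z / w z
  have hf : Measurable f := measurable_pi_lambda _ fun i => (um i).div (by fun_prop)
  have hb' : ∀ n, (∫⁻ z, (∫⁻ ξ, ENNReal.ofReal (|ξ| ^ p) ∂(nu n z)) ∂m) ≤ M * C := by
    intro n
    have hmeas : Measurable fun z => ∫⁻ ξ, ENNReal.ofReal (|ξ| ^ p) ∂(nu n z) :=
      Measurable.lintegral_kernel (by fun_prop)
    rw [hm, lintegral_withDensity_eq_lintegral_mul _ (by fun_prop) hmeas]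
    calc _ ≤ ∫⁻ z, M * ∫⁻ ξ, ENNReal.ofReal (|ξ| ^ p) ∂(nu n z) ∂lam := by
          refine lintegral_mono fun z => ?_
          simp only [Pi.mul_apply]
          gcongr
          exact wM z
      _ = M * ∫⁻ z, ∫⁻ ξ, ENNReal.ofReal (|ξ| ^ p) ∂(nu n z) ∂lam := lintegral_const_mul _ hmeas
      _ ≤ _ := by gcongr; exact hb n
  obtain ⟨κ, hκ, nk, hnk, hlim⟩ := ym_prob m f hf nu p hp (M * C)
    (ENNReal.mul_lt_top ENNReal.coe_lt_top hC) hb'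
  refine ⟨κ.comap f hf, inferInstance, nk, hnk, fun h hh φ₀ hφ₀ ⟨B, hB⟩ => ?_⟩
  let φ : BoundedContinuousFunction ℝ ℝ := BoundedContinuousFunction.ofNormedAddCommGroup φ₀ hφ₀ B hB
  change Tendsto (fun k => ∫ z, h z * (∫ ξ, φ ξ ∂(nu (nk k) z)) ∂lam) atTop
    (nhds (∫ z, h z * (∫ ξ, φ ξ ∂(κ.comap f hf z)) ∂lam))
  -- key approximation
  have approx : ∀ ε > 0, ∃ g : BoundedContinuousFunction (ℕ → ℝ) ℝ,
      Integrable (fun z => (w z : ℝ) * g (f z)) lam ∧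
      ∫ z, |h z - w z * g (f z)| ∂lam < ε := by
    intro ε hε
    obtain ⟨i, hi⟩ := hu h hh (ε / 2) (half_pos hε)
    have : IsProbabilityMeasure (m.map f) := Measure.isProbabilityMeasure_map hf.aemeasurable
    have hwu : ∀ z, (w z : ℝ) * (f z i) = u i z := fun z => by
      have : (w z : ℝ) ≠ 0 := by exact_mod_cast (wpos z).ne'
      simp only [f]; field_simp
    have hint : Integrable (fun x : ℕ → ℝ => x i) (m.map f) := by
      rw [integrable_map_measure (continuous_apply i).aestronglyMeasurable hf.aemeasurable, hm,
        integrable_withDensity_iff_integrable_smul wm]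
      refine (ui i).congr (ae_of_all _ fun z => ?_)
      simp only [Function.comp, NNReal.smul_def, smul_eq_mul, hwu]
    obtain ⟨g, hg, gi⟩ := hint.exists_boundedContinuous_integral_sub_le (ε := ε / 4) (by positivity)
    have gi' : Integrable (fun z => (w z : ℝ) * g (f z)) lam := by
      rw [integrable_map_measure (by fun_prop) hf.aemeasurable, hm,
        integrable_withDensity_iff_integrable_smul wm] at gi
      exact gi
    refine ⟨g, gi', ?_⟩
    rw [integral_map hf.aemeasurable (by fun_prop), hm,
      integral_withDensity_eq_integral_smul wm] at hg
    have e : ∀ z, w z • ‖f z i - g (f z)‖ = |u i z - w z * g (f z)| := fun z => by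
      rw [← hwu, ← mul_sub, abs_mul, NNReal.smul_def, smul_eq_mul, NNReal.abs_eq, Real.norm_eq_abs]
    simp only [e] at hg
    have i1 : Integrable (fun z => |h z - u i z|) lam := (hh.sub (ui i)).abs
    have i2 : Integrable (fun z => |u i z - w z * g (f z)|) lam := ((ui i).sub gi').abs
    calc ∫ z, |h z - w z * g (f z)| ∂lam
        ≤ ∫ z, (|h z - u i z| + |u i z - w z * g (f z)|) ∂lam :=
          integral_mono (hh.sub gi').abs (i1.add i2) fun z => abs_sub_le _ _ _
      _ = _ := integral_add i1 i2
      _ < ε := by linarith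
  have diff : ∀ (η : Kernel X ℝ) [IsMarkovKernel η] (g : BoundedContinuousFunction (ℕ → ℝ) ℝ),
      Integrable (fun z => (w z : ℝ) * g (f z)) lam →
      |∫ z, h z * (∫ ξ, φ ξ ∂(η z)) ∂lam - ∫ z, g (f z) * (∫ ξ, φ ξ ∂(η z)) ∂m|
        ≤ (∫ z, |h z - w z * g (f z)| ∂lam) * ‖φ‖ := by
    intro η _ g gi
    obtain ⟨am, ab⟩ := ym_avg (lam := lam) η φ
    have j1 : Integrable (fun z => h z * (∫ ξ, φ ξ ∂(η z))) lam :=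
      hh.mul_bdd am (ae_of_all _ ab)
    have j2 : Integrable (fun z => (w z * g (f z)) * (∫ ξ, φ ξ ∂(η z))) lam :=
      gi.mul_bdd am (ae_of_all _ ab)
    have e : ∫ z, g (f z) * (∫ ξ, φ ξ ∂(η z)) ∂m
        = ∫ z, (w z * g (f z)) * (∫ ξ, φ ξ ∂(η z)) ∂lam := by
      rw [hm, integral_withDensity_eq_integral_smul wm]
      simp only [NNReal.smul_def, smul_eq_mul, mul_assoc]
    rw [e, ← integral_sub j1 j2, ← integral_mul_const]
    refine (abs_integral_le_integral_abs).trans ?_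
    refine integral_mono (j1.sub j2).abs ((hh.sub gi).abs.mul_const _) fun z => ?_
    simp only
    rw [← sub_mul, abs_mul]
    gcongr
    exact ab z
  rw [Metric.tendsto_atTop]
  intro ε hε
  obtain ⟨g, gi, hg⟩ := approx (ε / (3 * (‖φ‖ + 1))) (by positivity)
  have hsmall : (∫ z, |h z - w z * g (f z)| ∂lam) * ‖φ‖ ≤ ε / 3 := by
    calc _ ≤ ε / (3 * (‖φ‖ + 1)) * (‖φ‖ + 1) := by
          gcongr; linarith
      _ = ε / 3 := by field_simp
  obtain ⟨N, hN⟩ := Metric.tendsto_atTop.1 (hlim g φ) (ε / 3) (by positivity)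
  refine ⟨N, fun k hk => ?_⟩
  have a1 := diff (nu (nk k)) g gi
  have a2 := diff (κ.comap f hf) g gi
  have a3 := hN k hk
  rw [Real.dist_eq] at a3 ⊢
  simp only [Kernel.comap_apply] at a2 ⊢
  rw [abs_lt] at a3 ⊢
  rw [abs_le] at a1 a2
  constructor <;> linarith [a1.1, a1.2, a2.1, a2.2, a3.1, a3.2]
end

section
/- (Compactness of Young measures, second part.) Let (X, λ) be a σ-finite measure space such that L¹(X, λ) is separable. Let (ν^n)_{n∈ℕ} be a sequence of Young measures on X such that for some p ∈ [1, ∞), sup_{n∈ℕ} ∫_X ∫_ℝ |ξ|^p dν^n_z(ξ) dλ(z) < ∞, and let f_n(z, ξ) = ν^n_z((ξ, ∞)) be the associated kinetic functions. Then there exist a Young measure ν on X, with associated kinetic function f(z, ξ) = ν_z((ξ, ∞)), and a strictly increasing sequence (n_k) such that f_{n_k} converges to f weak-star in L^∞(X × ℝ), i.e., for every g ∈ L¹(X × ℝ, λ ⊗ Leb), ∫_{X×ℝ} f_{n_k}(z, ξ) g(z, ξ) dλ(z) dξ → ∫_{X×ℝ} f(z, ξ) g(z, ξ) dλ(z) dξ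 as k → ∞. -/
open MeasureTheory ProbabilityTheory Filter
open scoped ENNReal Topology

lemma hilbert_weak_subseq_sep {S : Type*} [NormedAddCommGroup S] [InnerProductSpace ℝ S]
    [CompleteSpace S] [TopologicalSpace.SeparableSpace S]
    {ι : Type*} [Countable ι] (x : ℕ → ι → S) (R : ℝ)
    (hx : ∀ n i, ‖x n i‖ ≤ R) :
    ∃ nk : ℕ → ℕ, StrictMono nk ∧ ∃ y : ι → S, ∀ i v,
      Tendsto (fun k => inner ℝ (x (nk k) i) v) atTop (𝓝 (inner ℝ (y i) v)) := by
  let K : Set (WeakDual ℝ S) := WeakDual.toStrongDual ⁻¹' Metric.closedBall 0 R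
  have hK : IsCompact K := WeakDual.isCompact_closedBall 0 R
  have : TopologicalSpace.MetrizableSpace K := WeakDual.metrizable_of_isCompact ℝ S K hK
  have : CompactSpace K := isCompact_iff_compactSpace.mp hK
  have hmem : ∀ n i, StrongDual.toWeakDual (InnerProductSpace.toDual ℝ S (x n i)) ∈ K := by
    intro n i
    change InnerProductSpace.toDual ℝ S (x n i) ∈ Metric.closedBall 0 R
    rw [mem_closedBall_zero_iff, LinearIsometryEquiv.norm_map]
    exact hx n i
  let φ : ℕ → ι → K := fun n i => ⟨_, hmem n i⟩
  obtain ⟨a, nk, hnk, hlim⟩ := SeqCompactSpace.tendsto_subseq φ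
  refine ⟨nk, hnk, fun i => (InnerProductSpace.toDual ℝ S).symm
    (WeakDual.toStrongDual (a i).1), fun i v => ?_⟩
  have h1 : Tendsto (fun k => (φ (nk k) i)) atTop (𝓝 (a i)) := (tendsto_pi_nhds.mp hlim) i
  have h2 := (continuous_subtype_val.tendsto _).comp h1
  have h3 := ((WeakDual.eval_continuous v).tendsto _).comp h2
  rw [InnerProductSpace.toDual_symm_apply]
  exact h3

lemma hilbert_weak_subseq {H : Type*} [NormedAddCommGroup H] [InnerProductSpace ℝ H]
    [CompleteSpace H] {ι : Type*} [Countable ι] (x : ℕ → ι → H) (R : ℝ)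
    (hx : ∀ n i, ‖x n i‖ ≤ R) :
    ∃ nk : ℕ → ℕ, StrictMono nk ∧ ∃ y : ι → H, ∀ i v,
      Tendsto (fun k => inner ℝ (x (nk k) i) v) atTop (𝓝 (inner ℝ (y i) v)) := by
  obtain ⟨S, hS⟩ : ∃ S : Submodule ℝ H, S =
    (Submodule.span ℝ (Set.range fun p : ℕ × ι => x p.1 p.2)).topologicalClosure := ⟨_, rfl⟩
  have hcl : IsClosed (S : Set H) := hS ▸ Submodule.isClosed_topologicalClosure _
  have : CompleteSpace S := hcl.completeSpace_coe
  have hmem : ∀ n i, x n i ∈ S := fun n i => hS ▸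
    Submodule.le_topologicalClosure _ (Submodule.subset_span ⟨(n, i), rfl⟩)
  have : TopologicalSpace.SeparableSpace S := by
    have h1 : TopologicalSpace.IsSeparable (S : Set H) := by
      have := (Set.countable_range (fun p : ℕ × ι => x p.1 p.2)).isSeparable
      have := (this.span (R := ℝ)).closure
      simpa [hS, Submodule.topologicalClosure_coe] using this
    exact h1.separableSpace
  obtain ⟨nk, hnk, y, hy⟩ := hilbert_weak_subseq_sep (S := S) (fun n i => ⟨x n i, hmem n i⟩) R hx
  refine ⟨nk, hnk, fun i => y i, fun i v => ?_⟩
  have := hy i (S.orthogonalProjectionOnto v)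
  simpa only [Submodule.inner_orthogonalProjectionOnto_eq_of_mem_left] using this

lemma tendsto_integral_of_sets {X : Type*} [MeasurableSpace X] (μ : Measure X)
    [IsFiniteMeasure μ] (h : ℕ → X → ℝ) (u : X → ℝ) (hm : ∀ n, Measurable (h n))
    (hum : Measurable u) (h0 : ∀ n x, |h n x| ≤ 1) (hu0 : ∀ x, |u x| ≤ 1)
    (hset : ∀ A, MeasurableSet A →
      Tendsto (fun n => ∫ x in A, h n x ∂μ) atTop (𝓝 (∫ x in A, u x ∂μ)))
    (g : X → ℝ) (hg : Integrable g μ) :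
    Tendsto (fun n => ∫ x, h n x * g x ∂μ) atTop (𝓝 (∫ x, u x * g x ∂μ)) := by
  have hint : ∀ (f : X → ℝ), Measurable f → (∀ x, |f x| ≤ 1) → ∀ g, Integrable g μ →
      Integrable (fun x => f x * g x) μ := fun f hf hf1 g hg =>
    hg.bdd_mul (c := 1) hf.aestronglyMeasurable (Eventually.of_forall hf1)
  refine Integrable.induction (P := fun g : X → ℝ =>
    Tendsto (fun n => ∫ x, h n x * g x ∂μ) atTop (𝓝 (∫ x, u x * g x ∂μ))) ?_ ?_ ?_ ?_ hg
  · intro c s hs _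
    have key : ∀ f : X → ℝ, ∫ x, f x * s.indicator (fun _ => c) x ∂μ = (∫ x in s, f x ∂μ) * c := by
      intro f
      rw [← integral_mul_const, ← integral_indicator hs]
      congr 1; ext x; by_cases hx : x ∈ s <;> simp [hx]
    simp only [key]
    exact (hset s hs).mul_const c
  · intro f g _ hf hg h1 h2
    have key : ∀ w : X → ℝ, Measurable w → (∀ x, |w x| ≤ 1) → 
        ∫ x, w x * (f + g) x ∂μ = ∫ x, w x * f x ∂μ + ∫ x, w x * g x ∂μ := by
      intro w hw hw1
      rw [← integral_add (hint w hw hw1 f hf) (hint w hw hw1 g hg)]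
      simp [mul_add]
    simp only [key _ (hm _) (h0 _), key _ hum hu0]
    exact h1.add h2
  · rw [← isSeqClosed_iff_isClosed]
    intro G f hG hGf
    simp only [Set.mem_ofPred_eq] at hG ⊢
    have key : ∀ w : X → ℝ, Measurable w → (∀ x, |w x| ≤ 1) → ∀ n,
        dist (∫ x, w x * G n x ∂μ) (∫ x, w x * f x ∂μ) ≤ dist (G n) f := by
      intro w hw hw1 n
      rw [Real.dist_eq, ← integral_sub (hint w hw hw1 _ (L1.integrable_coeFn _))
        (hint w hw hw1 _ (L1.integrable_coeFn _)), L1.dist_eq_integral_dist]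
      refine (abs_integral_le_integral_abs).trans ?_
      refine integral_mono ?_ ?_ ?_
      · exact ((hint w hw hw1 _ (L1.integrable_coeFn _)).sub
          (hint w hw hw1 _ (L1.integrable_coeFn _))).abs
      · simp only [Real.dist_eq]
        exact ((L1.integrable_coeFn _).sub (L1.integrable_coeFn _)).abs
      · intro x
        simp only [Real.dist_eq]
        rw [← mul_sub, abs_mul]
        exact mul_le_of_le_one_left (abs_nonneg _) (hw1 x)
    rw [Metric.tendsto_atTop]
    intro ε hε
    obtain ⟨m, hm'⟩ := ((tendsto_iff_dist_tendsto_zero.mp hGf).eventually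
      (gt_mem_nhds (show 0 < ε / 3 by positivity))).exists
    obtain ⟨N, hN⟩ := Metric.tendsto_atTop.mp (hG m) (ε / 3) (by positivity)
    refine ⟨N, fun n hn => ?_⟩
    have e1 := key _ (hm n) (h0 n) m
    have e2 := key _ hum hu0 m
    have e3 := hN n hn
    have e4 := dist_triangle4_left (∫ x, h n x * G m x ∂μ) (∫ x, u x * G m x ∂μ)
      (∫ x, h n x * f x ∂μ) (∫ x, u x * f x ∂μ)
    linarith
  · intro f g hfg _ hf
    have key : ∀ w : X → ℝ, ∫ x, w x * f x ∂μ = ∫ x, w x * g x ∂μ := by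
      intro w
      refine integral_congr_ae ?_
      filter_upwards [hfg] with x hx
      rw [hx]
    simpa only [key] using hf

lemma weak_subseq {X : Type*} [MeasurableSpace X] (μ : Measure X)
    [IsFiniteMeasure μ] {ι : Type*} [Countable ι] (h : ℕ → ι → X → ℝ)
    (hm : ∀ n i, Measurable (h n i)) (h0 : ∀ n i x, 0 ≤ h n i x) (h1 : ∀ n i x, h n i x ≤ 1) :
    ∃ nk : ℕ → ℕ, StrictMono nk ∧ ∃ u : ι → X → ℝ, (∀ i, Measurable (u i)) ∧
      (∀ i x, 0 ≤ u i x) ∧ (∀ i x, u i x ≤ 1) ∧ ∀ i A, MeasurableSet A → 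
      Tendsto (fun k => ∫ x in A, h (nk k) i x ∂μ) atTop (𝓝 (∫ x in A, u i x ∂μ)) := by
  have hL : ∀ n i, MemLp (h n i) 2 μ := fun n i =>
    MemLp.of_bound (hm n i).aestronglyMeasurable 1 (Eventually.of_forall fun x => by
      rw [Real.norm_of_nonneg (h0 n i x)]; exact h1 n i x)
  obtain ⟨nk, hnk, y, hy⟩ := hilbert_weak_subseq (H := Lp ℝ 2 μ) (fun n i => (hL n i).toLp _)
    ((measureUnivNNReal μ : ℝ) ^ (2 : ℝ≥0∞).toReal⁻¹ * 1) (fun n i => by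
      refine Lp.norm_le_of_ae_bound zero_le_one ?_
      filter_upwards [(hL n i).coeFn_toLp] with x hx
      rw [hx, Real.norm_of_nonneg (h0 n i x)]; exact h1 n i x)
  have hyA : ∀ i A, MeasurableSet A → 
      Tendsto (fun k => ∫ x in A, h (nk k) i x ∂μ) atTop (𝓝 (∫ x in A, y i x ∂μ)) := by
    intro i A hA
    have := hy i (indicatorConstLp 2 hA (measure_ne_top μ A) (1 : ℝ))
    simp only [real_inner_comm (indicatorConstLp 2 hA (measure_ne_top μ A) (1 : ℝ)),
      L2.inner_indicatorConstLp_one] at this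
    refine (this.congr fun k => ?_)
    refine integral_congr_ae (ae_restrict_of_ae ?_)
    exact (hL (nk k) i).coeFn_toLp
  have hyint : ∀ i, Integrable (y i) μ := fun i => (Lp.memLp (y i)).integrable (by norm_num)
  have hint : ∀ n i, Integrable (h n i) μ := fun n i => (hL n i).integrable (by norm_num)
  have hy0 : ∀ i, 0 ≤ᵐ[μ] y i := by
    intro i
    refine ae_nonneg_of_forall_setIntegral_nonneg (hyint i) fun s hs _ => ?_
    exact ge_of_tendsto' (hyA i s hs) fun k => setIntegral_nonneg hs fun x _ => h0 _ _ _
  have hy1 : ∀ i, y i ≤ᵐ[μ] fun _ => (1 : ℝ) := by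
    intro i
    refine ae_le_of_forall_setIntegral_le (hyint i) (integrable_const _) fun s hs _ => ?_
    exact le_of_tendsto' (hyA i s hs) fun k => setIntegral_mono (hint _ _).integrableOn
      (integrable_const _) (fun x => h1 _ _ _)
  refine ⟨nk, hnk, fun i x => max 0 (min 1 (y i x)), fun i => ?_, fun i x => le_max_left _ _,
    fun i x => max_le zero_le_one (min_le_left _ _), fun i A hA => ?_⟩
  · exact measurable_const.max (measurable_const.min (Lp.stronglyMeasurable (y i)).measurable)
  · convert hyA i A hA using 2
    refine integral_congr_ae (ae_restrict_of_ae ?_)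
    filter_upwards [hy0 i, hy1 i] with x hx0 hx1
    simp only [Pi.zero_apply] at hx0
    simp [hx0, hx1]

lemma tendsto_integral_of_sets' {X : Type*} [MeasurableSpace X] (lam μ : Measure X)
    [IsFiniteMeasure μ] [SigmaFinite lam] (hac : lam ≪ μ)
    (h : ℕ → X → ℝ) (u : X → ℝ) (hm : ∀ n, Measurable (h n))
    (hum : Measurable u) (h0 : ∀ n x, |h n x| ≤ 1) (hu0 : ∀ x, |u x| ≤ 1)
    (hset : ∀ A, MeasurableSet A →
      Tendsto (fun n => ∫ x in A, h n x ∂μ) atTop (𝓝 (∫ x in A, u x ∂μ)))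
    (g : X → ℝ) (hg : Integrable g lam) :
    Tendsto (fun n => ∫ x, h n x * g x ∂lam) atTop (𝓝 (∫ x, u x * g x ∂lam)) := by
  have key : ∀ w : X → ℝ, ∫ x, w x * g x ∂lam =
      ∫ x, w x * ((lam.rnDeriv μ x).toReal • g x) ∂μ := by
    intro w
    rw [← integral_rnDeriv_smul hac]
    congr 1; ext x; simp only [smul_eq_mul]; ring
  simp only [key]
  exact tendsto_integral_of_sets μ h u hm hum h0 hu0 hset _
    ((integrable_rnDeriv_smul_iff hac).mpr hg)

lemma exists_kernel {X : Type*} [MeasurableSpace X] (μ : Measure X)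
    (u : ℚ → X → ℝ) (hum : ∀ q, Measurable (u q))
    (hu0 : ∀ q x, 0 ≤ u q x) (hu1 : ∀ q x, u q x ≤ 1)
    (hmono : ∀ᵐ z ∂μ, Monotone fun q => u q z)
    (hbot : ∀ᵐ z ∂μ, Tendsto (fun N : ℕ => u (-(N : ℚ)) z) atTop (𝓝 0))
    (htop : ∀ᵐ z ∂μ, Tendsto (fun N : ℕ => u (N : ℚ) z) atTop (𝓝 1)) :
    ∃ ν : Kernel X ℝ, IsMarkovKernel ν ∧ ∀ᵐ z ∂μ, ∀ q : ℚ,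
      u q z ≤ (ν z (Set.Iic (q : ℝ))).toReal ∧
      ∀ r, q < r → (ν z (Set.Iic (q : ℝ))).toReal ≤ u r z := by
  let G : X → ℚ → ℝ := fun z q => ⨅ r : Set.Ioi q, u r z
  have hG : Measurable G := by
    refine measurable_pi_iff.mpr fun q => ?_
    exact Measurable.iInf fun r => hum r
  have hbdd : ∀ z (q : ℚ), BddBelow (Set.range fun r : Set.Ioi q => u r z) := fun z q =>
    ⟨0, by rintro _ ⟨r, rfl⟩; exact hu0 _ _⟩
  have hGle : ∀ z (q r : ℚ), q < r → G z q ≤ u r z := fun z q r hqr =>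
    ciInf_le (hbdd z q) (⟨r, hqr⟩ : Set.Ioi q)
  have hGnn : ∀ z (q : ℚ), 0 ≤ G z q := fun z q => le_ciInf fun r => hu0 _ _
  have hleG : ∀ᵐ z ∂μ, ∀ q, u q z ≤ G z q := by
    filter_upwards [hmono] with z hz q
    exact le_ciInf fun r => hz (le_of_lt r.2)
  have hpt : ∀ᵐ z ∂μ, IsRatStieltjesPoint G z := by
    filter_upwards [hmono, hbot, htop, hleG] with z h1 h2 h3 h4
    have hmonoG : Monotone (G z) := by
      intro q r hqr
      exact le_ciInf fun s => hGle z q s (lt_of_le_of_lt hqr s.2)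
    refine ⟨hmonoG, ?_, ?_, ?_⟩
    · rw [tendsto_order]
      refine ⟨fun a ha => ?_, fun a ha => ?_⟩
      · obtain ⟨N, hN⟩ := (h3.eventually (lt_mem_nhds ha)).exists
        filter_upwards [eventually_ge_atTop (N : ℚ)] with q hq
        exact lt_of_lt_of_le hN ((h1 hq).trans (h4 q))
      · refine Eventually.of_forall fun q => lt_of_le_of_lt ?_ ha
        exact (hGle z q (q + 1) (by linarith)).trans (hu1 _ _)
    · rw [tendsto_order]
      refine ⟨fun a ha => ?_, fun a ha => ?_⟩
      · exact Eventually.of_forall fun q => lt_of_lt_of_le ha (hGnn z q)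
      · obtain ⟨N, hN⟩ := (h2.eventually (gt_mem_nhds ha)).exists
        filter_upwards [eventually_lt_atBot (-(N : ℚ))] with q hq
        exact lt_of_le_of_lt (hGle z _ _ hq) hN
    · intro t
      apply le_antisymm
      · refine le_ciInf fun r => ?_
        obtain ⟨s, hs1, hs2⟩ := exists_between (show t < r from r.2)
        refine le_trans (ciInf_le ⟨0, ?_⟩ (⟨s, hs1⟩ : Set.Ioi t)) (hGle z s r hs2)
        rintro _ ⟨r, rfl⟩; exact hGnn _ _
      · exact le_ciInf fun r => hmonoG (le_of_lt r.2)
  refine ⟨⟨fun z => (stieltjesOfMeasurableRat G hG z).measure,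
    measurable_measure_stieltjesOfMeasurableRat hG⟩, ⟨fun z => ?_⟩, ?_⟩
  · exact instIsProbabilityMeasure_stieltjesOfMeasurableRat hG z
  · filter_upwards [hpt, hleG] with z hz h4 q
    have e : ((stieltjesOfMeasurableRat G hG z).measure (Set.Iic (q : ℝ))).toReal = G z q := by
      rw [measure_stieltjesOfMeasurableRat_Iic, ENNReal.toReal_ofReal
        (stieltjesOfMeasurableRat_nonneg _ _ _), stieltjesOfMeasurableRat_eq,
        toRatCDF_of_isRatStieltjesPoint hz]
    simp only [Kernel.coe_mk, e]
    exact ⟨h4 q, hGle z q⟩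

lemma meas_Iic {X : Type*} [MeasurableSpace X] (ν : Kernel X ℝ) (x : ℝ) :
    Measurable fun z => (ν z (Set.Iic x)).toReal :=
  (ν.measurable_coe measurableSet_Iic).ennreal_toReal

lemma toReal_le_one' {X : Type*} [MeasurableSpace X] (ν : Kernel X ℝ) [IsMarkovKernel ν]
    (z : X) (s : Set ℝ) : (ν z s).toReal ≤ 1 :=
  ENNReal.toReal_le_of_le_ofReal zero_le_one (by simpa using prob_le_one)

lemma int_Iic {X : Type*} [MeasurableSpace X] (μ : Measure X) [IsFiniteMeasure μ]
    (ν : Kernel X ℝ) [IsMarkovKernel ν] (x : ℝ) :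
    Integrable (fun z => (ν z (Set.Iic x)).toReal) μ :=
  Integrable.of_bound (meas_Iic ν x).aestronglyMeasurable 1 (Eventually.of_forall fun z => by
    rw [Real.norm_of_nonneg ENNReal.toReal_nonneg]; exact toReal_le_one' ν z _)

lemma Iic_mono {X : Type*} [MeasurableSpace X] (ν : Kernel X ℝ) [IsMarkovKernel ν]
    (z : X) {x y : ℝ} (h : x ≤ y) : (ν z (Set.Iic x)).toReal ≤ (ν z (Set.Iic y)).toReal :=
  ENNReal.toReal_mono (measure_ne_top _ _) (measure_mono (Set.Iic_subset_Iic.mpr h))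

lemma slice_tendsto {X : Type*} [MeasurableSpace X] (μ : Measure X) [IsFiniteMeasure μ]
    (κ : ℕ → Kernel X ℝ) [∀ n, IsMarkovKernel (κ n)] (ν : Kernel X ℝ) [IsMarkovKernel ν]
    (u : ℚ → X → ℝ) (hui : ∀ q, Integrable (u q) μ)
    (hlim : ∀ (q : ℚ) A, MeasurableSet A →
      Tendsto (fun k => ∫ z in A, (κ k z (Set.Iic (q : ℝ))).toReal ∂μ) atTop
        (𝓝 (∫ z in A, u q z ∂μ)))
    (hν : ∀ᵐ z ∂μ, ∀ q : ℚ, u q z ≤ (ν z (Set.Iic (q : ℝ))).toReal ∧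
      ∀ r, q < r → (ν z (Set.Iic (q : ℝ))).toReal ≤ u r z) :
    ∀ᵐ ξ : ℝ, ∀ A, MeasurableSet A →
      Tendsto (fun k => ∫ z in A, (κ k z (Set.Iic ξ)).toReal ∂μ) atTop
        (𝓝 (∫ z in A, (ν z (Set.Iic ξ)).toReal ∂μ)) := by
  let M : Set X → ℝ → ℝ := fun A x => ∫ z in A, (ν z (Set.Iic x)).toReal ∂μ
  have hMm : ∀ A, Monotone (M A) := fun A x y hxy =>
    integral_mono (int_Iic _ ν x) (int_Iic _ ν y) fun z => Iic_mono ν z hxy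
  have hsub : ∀ A, MeasurableSet A → ∀ x y, x ≤ y → M A y - M A x ≤ M Set.univ y - M Set.univ x := by
    intro A hA x y hxy
    simp only [M, Measure.restrict_univ]
    rw [← integral_sub (int_Iic _ ν y) (int_Iic _ ν x),
      ← integral_sub (int_Iic _ ν y) (int_Iic _ ν x)]
    refine setIntegral_le_integral ((int_Iic _ ν y).sub (int_Iic _ ν x)) ?_
    exact Eventually.of_forall fun z => sub_nonneg.mpr (Iic_mono ν z hxy)
  filter_upwards [(hMm Set.univ).countable_not_continuousAt.ae_notMem volume] with ξ hξ A hA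
  simp only [Set.mem_ofPred_eq, not_not] at hξ
  have hc : ContinuousAt (M A) ξ := by
    rw [Metric.continuousAt_iff] at hξ ⊢
    intro ε hε
    obtain ⟨δ, hδ, H⟩ := hξ ε hε
    refine ⟨δ, hδ, fun {x} hx => lt_of_le_of_lt ?_ (H hx)⟩
    rw [Real.dist_eq, Real.dist_eq]
    rcases le_total x ξ with hle | hle
    · rw [abs_sub_comm, abs_sub_comm (M Set.univ x), abs_of_nonneg (sub_nonneg.mpr (hMm _ hle)),
        abs_of_nonneg (sub_nonneg.mpr (hMm _ hle))]
      exact hsub A hA _ _ hle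
    · rw [abs_of_nonneg (sub_nonneg.mpr (hMm _ hle)),
        abs_of_nonneg (sub_nonneg.mpr (hMm _ hle))]
      exact hsub A hA _ _ hle
  have hU1 : ∀ q : ℚ, ∫ z in A, u q z ∂μ ≤ M A q := fun q =>
    integral_mono_ae (hui q).integrableOn (int_Iic _ ν _) (ae_restrict_of_ae (by
      filter_upwards [hν] with z hz using (hz q).1))
  have hU2 : ∀ q r : ℚ, q < r → M A q ≤ ∫ z in A, u r z ∂μ := fun q r hqr =>
    integral_mono_ae (int_Iic _ ν _) (hui r).integrableOn (ae_restrict_of_ae (by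
      filter_upwards [hν] with z hz using (hz q).2 r hqr))
  rw [tendsto_order]
  refine ⟨fun a ha => ?_, fun a ha => ?_⟩
  · obtain ⟨l, hl, hl2⟩ := exists_Ioc_subset_of_mem_nhds (hc.eventually (lt_mem_nhds ha))
      ⟨ξ - 1, by linarith⟩
    obtain ⟨q, hq1, hq2⟩ := exists_rat_btwn hl
    obtain ⟨r, hr1, hr2⟩ := exists_rat_btwn hq2
    have h1 : a < M A q := hl2 ⟨hq1, hq2.le⟩
    have h2 := h1.trans_le (hU2 q r (by exact_mod_cast hr1))
    filter_upwards [(hlim r A hA).eventually (lt_mem_nhds h2)] with k hk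
    exact hk.trans_le (integral_mono (int_Iic _ _ _) (int_Iic _ _ _)
      fun z => Iic_mono _ z hr2.le)
  · obtain ⟨l, hl, hl2⟩ := exists_Ico_subset_of_mem_nhds (hc.eventually (gt_mem_nhds ha))
      ⟨ξ + 1, by linarith⟩
    obtain ⟨q, hq1, hq2⟩ := exists_rat_btwn hl
    have h1 : M A q < a := hl2 ⟨hq1.le, hq2⟩
    have h2 := (hU1 q).trans_lt h1
    filter_upwards [(hlim q A hA).eventually (gt_mem_nhds h2)] with k hk
    exact lt_of_le_of_lt (integral_mono (int_Iic _ _ _) (int_Iic _ _ _)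
      fun z => Iic_mono _ z hq1.le) hk

lemma tail_bound {X : Type*} [MeasurableSpace X] (lam : Measure X)
    (κ : Kernel X ℝ) [IsMarkovKernel κ] (p : ℝ) (hp : 1 ≤ p) (C : ℝ≥0∞) (hC : C < ⊤)
    (hb : (∫⁻ z, (∫⁻ ξ, ENNReal.ofReal (|ξ| ^ p) ∂(κ z)) ∂lam) ≤ C)
    (N : ℕ) (hN : 1 ≤ N) (s : Set ℝ) (hs : MeasurableSet s) (hsN : ∀ ξ ∈ s, (N : ℝ) ≤ |ξ|)
    (S : Set X) : ∫ z in S, (κ z s).toReal ∂lam ≤ C.toReal / N := by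
  have hN1 : (1 : ℝ) ≤ N := by exact_mod_cast hN
  have h1 : ∀ z, (N : ℝ≥0∞) * κ z s ≤ ∫⁻ ξ, ENNReal.ofReal (|ξ| ^ p) ∂(κ z) := by
    intro z
    rw [← setLIntegral_const]
    refine (setLIntegral_mono' hs fun ξ hξ => ?_).trans (setLIntegral_le_lintegral s _)
    rw [← ENNReal.ofReal_natCast]
    refine ENNReal.ofReal_le_ofReal ?_
    have h2 := hsN ξ hξ
    exact h2.trans (Real.self_le_rpow_of_one_le (hN1.trans h2) hp)
  have h2 : (N : ℝ≥0∞) * ∫⁻ z in S, κ z s ∂lam ≤ C := by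
    rw [← lintegral_const_mul _ (κ.measurable_coe hs)]
    exact (setLIntegral_le_lintegral S _).trans ((lintegral_mono h1).trans hb)
  rw [integral_toReal (κ.measurable_coe hs).aemeasurable
    (Eventually.of_forall fun z => measure_lt_top _ _), le_div_iff₀ (by linarith), mul_comm]
  have h3 := ENNReal.toReal_mono hC.ne h2
  rwa [ENNReal.toReal_mul, ENNReal.toReal_natCast] at h3

lemma ae_tendsto_zero {X : Type*} [MeasurableSpace X] (lam : Measure X) [SigmaFinite lam]
    (v : ℕ → X → ℝ) (hv : ∀ n, Measurable (v n)) (h0 : ∀ n x, 0 ≤ v n x) (h1 : ∀ n x, v n x ≤ 1)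
    (hanti : ∀ᵐ z ∂lam, Antitone fun n => v n z) (c : ℝ)
    (hb : ∀ N : ℕ, 1 ≤ N → ∀ S, MeasurableSet S → lam S < ⊤ → ∫ z in S, v N z ∂lam ≤ c / N) :
    ∀ᵐ z ∂lam, Tendsto (fun n => v n z) atTop (𝓝 0) := by
  refine ae_of_forall_measure_lt_top_ae_restrict _ fun S hS hS' => ?_
  have : IsFiniteMeasure (lam.restrict S) := isFiniteMeasure_restrict.mpr hS'.ne
  refine tendsto_of_integral_tendsto_of_antitone (F := fun _ => 0) (fun n => ?_)
    (integrable_const _) ?_ (ae_restrict_of_ae hanti) (Eventually.of_forall fun z i => h0 i z)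
  · exact Integrable.of_bound (hv n).aestronglyMeasurable 1 (Eventually.of_forall fun z => by
      rw [Real.norm_of_nonneg (h0 n z)]; exact h1 n z)
  · rw [integral_zero]
    refine tendsto_of_tendsto_of_tendsto_of_le_of_le' tendsto_const_nhds
      (tendsto_const_div_atTop_nhds_zero_nat c) ?_ ?_
    · exact Eventually.of_forall fun n => integral_nonneg fun z => h0 n z
    · filter_upwards [eventually_ge_atTop 1] with n hn using hb n hn S hS hS'

lemma toReal_Ioi {X : Type*} [MeasurableSpace X] (ν : Kernel X ℝ) [IsMarkovKernel ν]
    (z : X) (x : ℝ) : (ν z (Set.Ioi x)).toReal = 1 - (ν z (Set.Iic x)).toReal := by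
  have := probReal_compl_eq_one_sub (μ := ν z) (measurableSet_Iic (a := x))
  rwa [Set.compl_Iic] at this

lemma meas_Ioi {X : Type*} [MeasurableSpace X] (ν : Kernel X ℝ) [IsMarkovKernel ν] :
    Measurable fun q : X × ℝ => (ν q.1 (Set.Ioi q.2)).toReal := by
  have ht : MeasurableSet {w : (X × ℝ) × ℝ | w.1.2 < w.2} :=
    measurableSet_lt (measurable_snd.comp measurable_fst) measurable_snd
  have := Kernel.measurable_kernel_prodMk_left (κ := ν.comap Prod.fst measurable_fst) ht
  exact this.ennreal_toReal

lemma abs_toReal_le {X : Type*} [MeasurableSpace X] (ν : Kernel X ℝ) [IsMarkovKernel ν]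
    (z : X) (s : Set ℝ) : |(ν z s).toReal| ≤ 1 := by
  rw [abs_of_nonneg ENNReal.toReal_nonneg]; exact toReal_le_one' ν z s

/-- Compactness of Young measures, second part: under uniformly bounded `p`-moments, the
kinetic functions `f_n(z, ξ) = ν^n_z((ξ, ∞))` admit a subsequence converging weak-star in
`L^∞(X × ℝ)` to the kinetic function of a Young measure `ν`. -/
theorem youngMeasure_compactness_kinetic {X : Type*} [MeasurableSpace X] (lam : Measure X)
    [SigmaFinite lam] [TopologicalSpace.SeparableSpace (Lp ℝ 1 lam)]
    (nu : ℕ → Kernel X ℝ) [∀ n, IsMarkovKernel (nu n)]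
    (p : ℝ) (hp : 1 ≤ p)
    (hbound : ∃ C : ℝ≥0∞, C < ⊤ ∧
      ∀ n, (∫⁻ z, (∫⁻ ξ, ENNReal.ofReal (|ξ| ^ p) ∂(nu n z)) ∂lam) ≤ C) :
    ∃ nulim : Kernel X ℝ, IsMarkovKernel nulim ∧
      ∃ nk : ℕ → ℕ, StrictMono nk ∧
        ∀ g : X × ℝ → ℝ, Integrable g (lam.prod volume) →
          Tendsto
            (fun k => ∫ q : X × ℝ,
              ((nu (nk k) q.1) (Set.Ioi q.2)).toReal * g q ∂(lam.prod volume)) atTop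
            (nhds (∫ q : X × ℝ,
              ((nulim q.1) (Set.Ioi q.2)).toReal * g q ∂(lam.prod volume))) := by
  obtain ⟨C, hC, hCb⟩ := hbound
  have hac1 : lam ≪ lam.toFinite := absolutelyContinuous_toFinite lam
  have hac2 : lam.toFinite ≪ lam := toFinite_absolutelyContinuous lam
  obtain ⟨nk, hnk, u, hum, hu0, hu1, hlim⟩ := weak_subseq lam.toFinite
    (fun n (q : ℚ) z => (nu n z (Set.Iic (q : ℝ))).toReal) (fun n q => meas_Iic _ _)
    (fun n q z => ENNReal.toReal_nonneg) (fun n q z => toReal_le_one' _ _ _)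
  have hui : ∀ (μ : Measure X) [IsFiniteMeasure μ] q, Integrable (u q) μ := fun μ _ q =>
    Integrable.of_bound (hum q).aestronglyMeasurable 1 (Eventually.of_forall fun z => by
      rw [Real.norm_of_nonneg (hu0 q z)]; exact hu1 q z)
  have hmono : ∀ᵐ z ∂lam, Monotone fun q => u q z := by
    have : ∀ q r : ℚ, q ≤ r → u q ≤ᵐ[lam.toFinite] u r := by
      intro q r hqr
      refine ae_le_of_forall_setIntegral_le (hui _ q) (hui _ r) fun s hs _ => ?_
      refine le_of_tendsto_of_tendsto' (hlim q s hs) (hlim r s hs) fun k => ?_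
      exact integral_mono (int_Iic _ _ _) (int_Iic _ _ _)
        fun z => Iic_mono _ z (by exact_mod_cast hqr)
    have h2 : ∀ᵐ z ∂lam.toFinite, ∀ q r : ℚ, q ≤ r → u q z ≤ u r z := by
      rw [ae_all_iff]; intro q
      rw [ae_all_iff]; intro r
      by_cases hqr : q ≤ r
      · filter_upwards [this q r hqr] with z hz _ using hz
      · exact Eventually.of_forall fun z h => absurd h hqr
    filter_upwards [hac1 h2] with z hz q r hqr using hz q r hqr
  have hlimS : ∀ (q : ℚ) S, MeasurableSet S → lam S < ⊤ →
      Tendsto (fun k => ∫ z in S, (nu (nk k) z (Set.Iic (q : ℝ))).toReal ∂lam) atTop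
        (𝓝 (∫ z in S, u q z ∂lam)) := by
    intro q S hS hS'
    have := tendsto_integral_of_sets' lam lam.toFinite hac1
      (fun k z => (nu (nk k) z (Set.Iic (q : ℝ))).toReal) (u q) (fun k => meas_Iic _ _) (hum q)
      (fun k z => abs_toReal_le _ _ _)
      (fun z => by rw [abs_of_nonneg (hu0 q z)]; exact hu1 q z) (hlim q)
      (S.indicator fun _ => 1) ((integrable_indicator_iff hS).mpr
        (integrableOn_const hS'.ne))
    have key : ∀ w : X → ℝ, ∫ z, w z * S.indicator (fun _ => (1 : ℝ)) z ∂lam = ∫ z in S, w z ∂lam := by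
      intro w
      rw [← integral_indicator hS]
      congr 1; ext z; by_cases hz : z ∈ S <;> simp [hz]
    simpa only [key] using this
  have hbot : ∀ᵐ z ∂lam, Tendsto (fun N : ℕ => u (-(N : ℚ)) z) atTop (𝓝 0) := by
    refine ae_tendsto_zero lam (fun N => u (-(N : ℚ))) (fun n => hum _) (fun n => hu0 _)
      (fun n => hu1 _) ?_ C.toReal fun N hN S hS hS' => ?_
    · filter_upwards [hmono] with z hz m n hmn
      exact hz (by simpa using hmn)
    · refine le_of_tendsto' (hlimS _ S hS hS') fun k => ?_
      refine tail_bound lam _ p hp C hC (hCb _) N hN _ measurableSet_Iic (fun ξ hξ => ?_) S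
      have : ξ ≤ -(N : ℝ) := by simpa using hξ
      exact le_abs.mpr (Or.inr (by linarith))
  have htop : ∀ᵐ z ∂lam, Tendsto (fun N : ℕ => u (N : ℚ) z) atTop (𝓝 1) := by
    have : ∀ᵐ z ∂lam, Tendsto (fun N : ℕ => 1 - u (N : ℚ) z) atTop (𝓝 0) := by
      refine ae_tendsto_zero lam (fun N z => 1 - u (N : ℚ) z)
        (fun n => measurable_const.sub (hum _))
        (fun n z => sub_nonneg.mpr (hu1 _ _))
        (fun n z => sub_le_self _ (hu0 _ _)) ?_ C.toReal fun N hN S hS hS' => ?_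
      · filter_upwards [hmono] with z hz m n hmn
        exact sub_le_sub_left (hz (by exact_mod_cast hmn)) _
      · have : IsFiniteMeasure (lam.restrict S) := isFiniteMeasure_restrict.mpr hS'.ne
        rw [integral_sub (integrable_const _) (hui _ _)]
        refine le_of_tendsto' (tendsto_const_nhds.sub (hlimS _ S hS hS')) fun k => ?_
        rw [← integral_sub (integrable_const _) (int_Iic _ _ _)]
        simp only [← toReal_Ioi]
        refine tail_bound lam _ p hp C hC (hCb _) N hN _ measurableSet_Ioi (fun ξ hξ => ?_) S
        have : (N : ℝ) < ξ := by simpa using hξ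
        exact le_abs.mpr (Or.inl this.le)
    filter_upwards [this] with z hz
    simpa using hz.const_sub 1
  obtain ⟨ν, hνM, hν⟩ := exists_kernel lam.toFinite u hum hu0 hu1 (hac2 hmono) (hac2 hbot)
    (hac2 htop)
  refine ⟨ν, hνM, nk, hnk, fun g hg => ?_⟩
  have hslice := slice_tendsto lam.toFinite (fun k => nu (nk k)) ν u (hui _) hlim hν
  have hint : ∀ (κ : Kernel X ℝ) [IsMarkovKernel κ],
      Integrable (fun q : X × ℝ => (κ q.1 (Set.Ioi q.2)).toReal * g q) (lam.prod volume) :=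
    fun κ _ => hg.bdd_mul (c := 1) (meas_Ioi κ).aestronglyMeasurable
      (Eventually.of_forall fun q => abs_toReal_le κ _ _)
  rw [integral_prod_symm _ (hint ν)]
  have e : ∀ k, ∫ q : X × ℝ, ((nu (nk k) q.1) (Set.Ioi q.2)).toReal * g q ∂(lam.prod volume) =
      ∫ ξ, ∫ z, ((nu (nk k) z) (Set.Ioi ξ)).toReal * g (z, ξ) ∂lam := fun k =>
    integral_prod_symm _ (hint (nu (nk k)))
  simp only [e]
  refine tendsto_integral_of_dominated_convergence (fun ξ => ∫ z, ‖g (z, ξ)‖ ∂lam)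
    (fun k => (hint (nu (nk k))).integral_prod_right.aestronglyMeasurable)
    hg.integral_norm_prod_right (fun k => ?_) ?_
  · filter_upwards [hg.prod_left_ae] with ξ hξ
    refine norm_integral_le_of_norm_le hξ.norm (Eventually.of_forall fun z => ?_)
    rw [norm_mul]
    exact mul_le_of_le_one_left (norm_nonneg _) (abs_toReal_le _ _ _)
  · filter_upwards [hg.prod_left_ae, hslice] with ξ hξ hs
    have key : ∀ (κ : Kernel X ℝ) [IsMarkovKernel κ],
        ∫ z, (κ z (Set.Ioi ξ)).toReal * g (z, ξ) ∂lam =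
        ∫ z, g (z, ξ) ∂lam - ∫ z, (κ z (Set.Iic ξ)).toReal * g (z, ξ) ∂lam := by
      intro κ _
      rw [← integral_sub hξ (hξ.bdd_mul (c := 1) (meas_Iic κ ξ).aestronglyMeasurable
        (Eventually.of_forall fun q => abs_toReal_le κ _ _))]
      congr 1; ext z; rw [toReal_Ioi]; ring
    simp only [key]
    refine tendsto_const_nhds.sub ?_
    exact tendsto_integral_of_sets' lam lam.toFinite hac1 _ _ (fun k => meas_Iic _ _)
      (meas_Iic _ _) (fun k z => abs_toReal_le _ _ _) (fun z => abs_toReal_le _ _ _) hs _ hξ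
end

section
/- (Measure-theoretic core of the Reduction Theorem.) Let (X, λ) be a σ-finite measure space and let ν be a Young measure on X with kinetic function F(z, ξ) = ν_z((ξ, ∞)). If F(z, ξ)(1 − F(z, ξ)) = 0 for λ ⊗ Leb-almost every (z, ξ) ∈ X × ℝ, then there exists a measurable function u : X → ℝ such that ν_z = δ_{u(z)} for λ-almost every z ∈ X; equivalently, F(z, ξ) = 1_{u(z)>ξ} for λ ⊗ Leb-almost every (z, ξ). -/
open MeasureTheory ProbabilityTheory

lemma aux_dirac (μ : Measure ℝ) [IsProbabilityMeasure μ]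
    (h : ∀ᵐ x : ℝ, (μ (Set.Ioi x)).toReal * (1 - (μ (Set.Ioi x)).toReal) = 0) :
    ∃ c, μ = Measure.dirac c := by
  have hd : Dense {x : ℝ | (μ (Set.Ioi x)).toReal * (1 - (μ (Set.Ioi x)).toReal) = 0} :=
    Measure.dense_of_ae h
  have key : ∀ x ∈ μ.support, ∀ y ∈ μ.support, ¬ x < y := by
    intro x hx y hy hxy
    obtain ⟨d, hd1, hd2⟩ := hd.exists_between hxy
    have h1 : 0 < μ (Set.Iio d) := Measure.mem_support_iff_forall x |>.1 hx _ (Iio_mem_nhds hd2.1)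
    have h2 : 0 < μ (Set.Ioi d) := Measure.mem_support_iff_forall y |>.1 hy _ (Ioi_mem_nhds hd2.2)
    have h3 : 0 < (μ (Set.Ioi d)).toReal := ENNReal.toReal_pos h2.ne' (measure_ne_top _ _)
    have h4 : (μ (Set.Ioi d)).toReal = 1 := by
      rcases mul_eq_zero.1 hd1 with h | h <;> linarith
    have h5 : μ (Set.Ioi d) = 1 := by
      rw [← ENNReal.toReal_eq_one_iff]; exact h4
    have h6 : μ (Set.Ioi d)ᶜ = 0 := (prob_compl_eq_zero_iff measurableSet_Ioi).2 h5
    have h7 : μ (Set.Iio d) = 0 := measure_mono_null (by intro z hz; simpa using le_of_lt hz) h6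
    exact h1.ne' h7
  have hn : μ.support.Nonempty := Measure.nonempty_support (IsProbabilityMeasure.ne_zero μ)
  obtain ⟨c, hc⟩ := hn
  refine ⟨c, ?_⟩
  have hs : ∀ᵐ x ∂μ, x = c := by
    filter_upwards [Measure.support_mem_ae (μ := μ)] with x hx
    exact le_antisymm (not_lt.1 (key c hc x hx)) (not_lt.1 (key x hx c hc))
  have h1 : μ.map id = μ.map (fun _ => c) := Measure.map_congr hs
  simpa [Measure.map_const] using h1


/-- Measure-theoretic core of the Reduction Theorem: if the kinetic function
`F(z, ξ) = ν_z((ξ, ∞))` of a Young measure `ν` on a σ-finite measure space satisfies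
`F(1 - F) = 0` almost everywhere with respect to `λ ⊗ Leb`, then `ν` is a.e. a Dirac mass
`δ_{u(z)}` for some measurable `u : X → ℝ`; equivalently `F(z, ξ) = 1_{u(z)>ξ}` a.e. -/
theorem reduction_young_measure_dirac {X : Type*} [MeasurableSpace X] (lam : Measure X)
    [SigmaFinite lam] (nu : Kernel X ℝ) [IsMarkovKernel nu]
    (h : ∀ᵐ q : X × ℝ ∂(lam.prod volume),
      (nu q.1 (Set.Ioi q.2)).toReal * (1 - (nu q.1 (Set.Ioi q.2)).toReal) = 0) :
    ∃ u : X → ℝ, Measurable u ∧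
      (∀ᵐ z ∂lam, nu z = Measure.dirac (u z)) ∧
      (∀ᵐ q : X × ℝ ∂(lam.prod volume),
        (nu q.1 (Set.Ioi q.2)).toReal =
          Set.indicator (Set.Iio (u q.1)) (fun _ => (1 : ℝ)) q.2) := by
  have hu : Measurable fun z => ∫ x, x ∂(nu z) :=
    (StronglyMeasurable.integral_kernel (κ := nu) (f := fun x : ℝ => x)
      stronglyMeasurable_id).measurable
  have hD : ∀ᵐ z ∂lam, nu z = Measure.dirac (∫ x, x ∂(nu z)) := by
    filter_upwards [Measure.ae_ae_of_ae_prod h] with z hz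
    obtain ⟨c, hc⟩ := aux_dirac (nu z) hz
    rw [hc, integral_dirac]
  refine ⟨_, hu, hD, ?_⟩
  filter_upwards [Measure.quasiMeasurePreserving_fst.ae hD] with q hq
  set c := ∫ x, x ∂(nu q.1) with hc
  rw [hq, Measure.dirac_apply' _ measurableSet_Ioi]
  by_cases hlt : q.2 < c <;> simp [Set.indicator, hlt]
end

section
/- (Nonnegativity of the BGK defect measure.) Let F : ℝ → ℝ be measurable with 0 ≤ F(ξ) ≤ 1 for all ξ, and suppose that ξ ↦ F(ξ) − 1_{0>ξ} is Lebesgue-integrable on ℝ. Define the local density u := ∫_ℝ (F(ζ) − 1_{0>ζ}) dζ and m(ξ) := ∫_{−∞}^ξ (1_{u>ζ} − F(ζ)) dζ. Then ∫_ℝ (1_{u>ζ} − F(ζ)) dζ = 0 and m(ξ) ≥ 0 for every ξ ∈ ℝ. -/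
open MeasureTheory

/-- Nonnegativity of the BGK defect measure: if `F : ℝ → [0,1]` is measurable with
`ξ ↦ F(ξ) - 1_{0>ξ}` integrable, `u = ∫ (F - 1_{0>·})` is the local density and
`m(ξ) = ∫_{-∞}^ξ (1_{u>ζ} - F(ζ)) dζ`, then `∫_ℝ (1_{u>ζ} - F(ζ)) dζ = 0` and
`m(ξ) ≥ 0` for every `ξ`. -/
theorem bgk_defect_measure_nonneg (F : ℝ → ℝ) (hFmeas : Measurable F)
    (hF0 : ∀ ξ, 0 ≤ F ξ) (hF1 : ∀ ξ, F ξ ≤ 1)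
    (hint : Integrable (fun ξ => F ξ - (Set.Iio (0 : ℝ)).indicator (fun _ => (1 : ℝ)) ξ))
    (u : ℝ) (hu : u = ∫ ξ : ℝ, (F ξ - (Set.Iio (0 : ℝ)).indicator (fun _ => (1 : ℝ)) ξ)) :
    (∫ ζ : ℝ, ((Set.Iio u).indicator (fun _ => (1 : ℝ)) ζ - F ζ)) = 0 ∧
    ∀ ξ : ℝ, 0 ≤ ∫ ζ in Set.Iio ξ, ((Set.Iio u).indicator (fun _ => (1 : ℝ)) ζ - F ζ) := by
  have key : ∀ ζ : ℝ, (Set.Iio u).indicator (fun _ => (1 : ℝ)) ζ - F ζ =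
      ((Set.Ico 0 u).indicator (fun _ => (1 : ℝ)) ζ - (Set.Ico u 0).indicator (fun _ => (1 : ℝ)) ζ)
        - (F ζ - (Set.Iio (0 : ℝ)).indicator (fun _ => (1 : ℝ)) ζ) := by
    intro ζ
    simp only [Set.indicator_apply, Set.mem_Iio, Set.mem_Ico]
    grind
  have h1 : Integrable ((Set.Ico 0 u).indicator (fun _ => (1 : ℝ))) :=
    (integrable_indicator_iff measurableSet_Ico).2 (integrableOn_const (by simp))
  have h2 : Integrable ((Set.Ico u 0).indicator (fun _ => (1 : ℝ))) :=
    (integrable_indicator_iff measurableSet_Ico).2 (integrableOn_const (by simp))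
  have hg : Integrable (fun ζ => (Set.Iio u).indicator (fun _ => (1 : ℝ)) ζ - F ζ) := by
    simp_rw [key]
    exact (h1.sub h2).sub hint
  have h0 : (∫ ζ : ℝ, ((Set.Iio u).indicator (fun _ => (1 : ℝ)) ζ - F ζ)) = 0 := by
    simp_rw [key]
    have h12 : Integrable (fun ζ => (Set.Ico 0 u).indicator (fun _ => (1 : ℝ)) ζ -
        (Set.Ico u 0).indicator (fun _ => (1 : ℝ)) ζ) := h1.sub h2
    rw [integral_sub h12 hint, ← hu, integral_sub h1 h2,
      integral_indicator measurableSet_Ico, integral_indicator measurableSet_Ico]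
    simp only [integral_const, smul_eq_mul, mul_one, measureReal_restrict_apply_univ,
      Measure.real, Real.volume_Ico, ENNReal.toReal_ofReal']
    rcases le_total 0 u with h | h
    · simp [h]
    · simp [h]
  refine ⟨h0, fun ξ => ?_⟩
  rcases le_total ξ u with h | h
  · refine setIntegral_nonneg measurableSet_Iio fun ζ hζ => ?_
    rw [Set.indicator_of_mem (show ζ ∈ Set.Iio u from lt_of_lt_of_le hζ h)]
    linarith [hF1 ζ]
  · have hs := integral_add_compl (measurableSet_Iio (a := ξ)) hg
    have hn : ∫ ζ in (Set.Iio ξ)ᶜ, ((Set.Iio u).indicator (fun _ => (1 : ℝ)) ζ - F ζ) ≤ 0 := by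
      refine setIntegral_nonpos measurableSet_Iio.compl fun ζ hζ => ?_
      have : ξ ≤ ζ := by simpa using hζ
      rw [Set.indicator_of_notMem (by simp; linarith)]
      linarith [hF0 ζ]
    linarith
end

section
/- (Sign preservation along characteristics.) Let N ∈ ℕ and let v : ℝ^N × ℝ → ℝ^N × ℝ be globally Lipschitz continuous, and assume that the last (scalar) component of v(x, 0) equals 0 for every x ∈ ℝ^N. Let s ≤ T and let φ : ℝ → ℝ^N × ℝ satisfy φ'(t) = v(φ(t)) for all t ∈ [s, T] (derivative in the sense of HasDerivAt). If the last component of φ(s) is nonnegative, then the last component of φ(t) is nonnegative for every t ∈ [s, T]. -/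
open Set

/-- Sign preservation along characteristics: if the globally Lipschitz vector field `v` on
`ℝ^N × ℝ` has vanishing last component on the hyperplane `ξ = 0`, then a solution `φ` of
`φ' = v(φ)` on `[s, T]` whose last component is nonnegative at time `s` keeps a
nonnegative last component throughout `[s, T]`. -/
theorem sign_preserved_along_characteristics (N : ℕ)
    (v : (Fin N → ℝ) × ℝ → (Fin N → ℝ) × ℝ) (K : NNReal) (hv : LipschitzWith K v)
    (hv0 : ∀ x : Fin N → ℝ, (v (x, 0)).2 = 0)
    (s T : ℝ) (hsT : s ≤ T)
    (φ : ℝ → (Fin N → ℝ) × ℝ)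
    (hφ : ∀ t ∈ Icc s T, HasDerivAt φ (v (φ t)) t)
    (hinit : 0 ≤ (φ s).2) :
    ∀ t ∈ Icc s T, 0 ≤ (φ t).2 := by
  intro t ht
  by_contra hneg
  have hlt : (φ t).2 < 0 := not_le.mp hneg
  have hd : ∀ r ∈ Icc s T, HasDerivAt (fun u => (φ u).2) (v (φ r)).2 r := fun r hr =>
    (hasFDerivAt_snd (𝕜 := ℝ) (p := φ r)).comp_hasDerivAt r (hφ r hr)
  have hc : ContinuousOn (fun u => (φ u).2) (Icc s T) := fun r hr =>
    (hd r hr).continuousAt.continuousWithinAt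
  have hb : ∀ y : (Fin N → ℝ) × ℝ, ‖(v y).2‖ ≤ K * ‖y.2‖ := by
    intro y
    have h1 := hv.dist_le_mul y (y.1, 0)
    have h2 : dist (v y).2 (v (y.1, 0)).2 ≤ dist (v y) (v (y.1, 0)) := by
      rw [Prod.dist_eq]
      exact le_max_right _ _
    have h3 : dist y (y.1, 0) = ‖y.2‖ := by
      rw [Prod.dist_eq]
      simp
    rw [hv0, dist_zero_right] at h2
    rw [h3] at h1
    exact h2.trans h1
  obtain ⟨c, hcm, hc0⟩ := intermediate_value_Icc' ht.1
    (hc.mono (Icc_subset_Icc_right ht.2)) (show (0 : ℝ) ∈ Icc (φ t).2 (φ s).2 from ⟨hlt.le, hinit⟩)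
  have hz := eq_zero_of_abs_deriv_le_mul_abs_self_of_eq_zero_right
    (f := fun u => (φ u).2) (f' := fun u => (v (φ u)).2) (K := K) (a := c) (b := T)
    (hc.mono (Icc_subset_Icc_left hcm.1))
    (fun r hr => (hd r ⟨hcm.1.trans hr.1, hr.2.le⟩).hasDerivWithinAt)
    hc0 (fun r _ => hb (φ r)) t ⟨hcm.2, ht.2⟩
  exact hlt.ne hz
end

section
/- (Liouville: divergence-free vector fields generate volume-preserving flows.) Let d ∈ ℕ, let v : ℝ^d → ℝ^d be of class C¹ with vanishing divergence, i.e., trace(Dv(x)) = 0 for all x ∈ ℝ^d, where Dv(x) is the Fréchet derivative of v at x. Let φ : ℝ × ℝ^d → ℝ^d be such that (t, x) ↦ φ(t, x) is of class C¹, φ(0, x) = x for all x, and ∂_t φ(t, x) = v(φ(t, x)) for all (t, x). Then the Jacobian determinant satisfies det(D_x φ(t, x)) = 1 for all t ∈ ℝ and x ∈ ℝ^d. -/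
theorem aux_det_deriv (d : ℕ) (M : ℝ → Fin d → Fin d → ℝ) (B : Matrix (Fin d) (Fin d) ℝ) (t : ℝ)
    (hM : HasDerivAt M (fun i j => ∑ k, B i k * M t k j) t) :
    HasDerivAt (fun s => Matrix.det (Matrix.of (M s))) (B.trace * Matrix.det (Matrix.of (M t))) t := by
  let f : ContinuousMultilinearMap ℝ (fun _ : Fin d => Fin d → ℝ) ℝ :=
    { (Matrix.detRowAlternating (R := ℝ) (n := Fin d)).toMultilinearMap with
      cont := by
        change Continuous (fun m : Fin d → Fin d → ℝ => Matrix.det (Matrix.of m))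
        exact Continuous.matrix_det continuous_id }
  have hf : ∀ m : Fin d → Fin d → ℝ, f m = Matrix.det (Matrix.of m) := fun m => rfl
  have h := (f.hasFDerivAt (M t)).comp_hasDerivAt t hM
  rw [ContinuousMultilinearMap.linearDeriv_apply] at h
  have e : (∑ i, f (Function.update (M t) i (fun j => ∑ k, B i k * M t k j)))
      = B.trace * Matrix.det (Matrix.of (M t)) := by
    rw [Matrix.trace, Finset.sum_mul]
    refine Finset.sum_congr rfl fun i _ => ?_
    have := Matrix.det_updateRow_sum (Matrix.of (M t)) i (B i)
    rw [smul_eq_mul] at this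
    rw [Matrix.diag_apply, ← this, hf]
    congr 1
    ext a b
    by_cases hab : a = i
    · subst hab
      rw [Matrix.updateRow_self]; simp [Finset.sum_apply]
    · rw [Matrix.updateRow_ne hab]; simp [Function.update_of_ne hab]
  rw [e] at h
  exact h

theorem aux_variational (d : ℕ)
    (v : (Fin d → ℝ) → (Fin d → ℝ)) (hv : ContDiff ℝ 1 v)
    (φ : ℝ → (Fin d → ℝ) → (Fin d → ℝ))
    (hφreg : ContDiff ℝ 1 (fun p : ℝ × (Fin d → ℝ) => φ p.1 p.2))
    (hφ0 : ∀ x, φ 0 x = x)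
    (hφode : ∀ t x, HasDerivAt (fun τ => φ τ x) (v (φ t x)) t) (x : Fin d → ℝ) (t : ℝ) :
    HasDerivAt (fun s => fderiv ℝ (fun y => φ s y) x)
      ((fderiv ℝ v (φ t x)).comp (fderiv ℝ (fun y => φ t y) x)) t := by
  have hφc := hφreg.continuous
  have hinner : ∀ s y, HasFDerivAt (fun y => φ s y)
      ((fderiv ℝ (fun p : ℝ × (Fin d → ℝ) => φ p.1 p.2) (s, y)).comp
        (ContinuousLinearMap.inr ℝ ℝ (Fin d → ℝ))) y := fun s y =>
    ((hφreg.differentiable one_ne_zero) (s, y)).hasFDerivAt.comp y (hasFDerivAt_prodMk_right s y)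
  have hDc : Continuous (fun p : ℝ × (Fin d → ℝ) => fderiv ℝ (fun y => φ p.1 y) p.2) := by
    have : (fun p : ℝ × (Fin d → ℝ) => fderiv ℝ (fun y => φ p.1 y) p.2) = fun p =>
      ((fderiv ℝ (fun p : ℝ × (Fin d → ℝ) => φ p.1 p.2) p).comp
        (ContinuousLinearMap.inr ℝ ℝ (Fin d → ℝ))) := by
      funext p
      exact (hinner p.1 p.2).fderiv
    rw [this]
    exact (hφreg.continuous_fderiv one_ne_zero).clm_comp continuous_const
  let F' : (Fin d → ℝ) → ℝ → (Fin d → ℝ) →L[ℝ] (Fin d → ℝ) := fun y s =>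
    (fderiv ℝ v (φ s y)).comp (fderiv ℝ (fun y => φ s y) y)
  have hF'c : Continuous (fun p : ℝ × (Fin d → ℝ) => F' p.2 p.1) :=
    ((hv.continuous_fderiv one_ne_zero).comp hφc).clm_comp hDc
  have hF'x : ∀ y, Continuous (F' y) := fun y =>
    hF'c.comp (continuous_id.prodMk continuous_const)
  have hvx : ∀ y, Continuous (fun s => v (φ s y)) := fun y =>
    hv.continuous.comp (hφc.comp (continuous_id.prodMk continuous_const))
  have hint : ∀ s y, φ s y = y + ∫ r in (0:ℝ)..s, v (φ r y) := by
    intro s y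
    rw [intervalIntegral.integral_eq_sub_of_hasDerivAt (fun r _ => hφode r y)
      ((hvx y).intervalIntegrable _ _), hφ0]
    abel
  have hA : ∀ s, fderiv ℝ (fun y => φ s y) x
      = ContinuousLinearMap.id ℝ (Fin d → ℝ) + ∫ r in (0:ℝ)..s, F' x r := by
    intro s
    obtain ⟨C, hC⟩ := ((isCompact_uIcc (a := (0:ℝ)) (b := s)).prod
      (isCompact_closedBall x 1)).exists_bound_of_continuousOn hF'c.continuousOn
    have h := intervalIntegral.hasFDerivAt_integral_of_dominated_of_fderiv_le
      (𝕜 := ℝ) (μ := MeasureTheory.volume) (a := (0:ℝ)) (b := s) (bound := fun _ => C)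
      (F := fun y r => v (φ r y)) (F' := F') (x₀ := x)
      (Metric.closedBall_mem_nhds x one_pos)
      (Filter.Eventually.of_forall fun y => (hvx y).aestronglyMeasurable)
      ((hvx x).intervalIntegrable _ _)
      (hF'x x).aestronglyMeasurable
      (Filter.Eventually.of_forall fun r hr y hy =>
        hC (r, y) ⟨Set.uIoc_subset_uIcc hr, hy⟩)
      intervalIntegrable_const
      (Filter.Eventually.of_forall fun r _ y _ =>
        ((hv.differentiable one_ne_zero) (φ r y)).hasFDerivAt.comp y
          (hinner r y).differentiableAt.hasFDerivAt)
    have h2 := (hasFDerivAt_id x).add h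
    have e : (fun y => φ s y) = fun y => y + ∫ r in (0:ℝ)..s, v (φ r y) := by
      funext y
      exact hint s y
    rw [e]
    exact h2.fderiv
  rw [funext hA]
  exact (intervalIntegral.integral_hasDerivAt_right ((hF'x x).intervalIntegrable _ _)
    ((hF'x x).stronglyMeasurableAtFilter _ _) (hF'x x).continuousAt).const_add _

/-- Liouville's theorem: the flow of a `C¹` divergence-free vector field on `ℝ^d` is
volume preserving, i.e. the Jacobian determinant of the flow map equals `1`. -/
theorem liouville_divergence_free_flow_volume_preserving (d : ℕ)
    (v : (Fin d → ℝ) → (Fin d → ℝ)) (hv : ContDiff ℝ 1 v)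
    (hdiv : ∀ x, LinearMap.trace ℝ (Fin d → ℝ)
      ((fderiv ℝ v x : (Fin d → ℝ) →L[ℝ] (Fin d → ℝ)) :
        (Fin d → ℝ) →ₗ[ℝ] (Fin d → ℝ)) = 0)
    (φ : ℝ → (Fin d → ℝ) → (Fin d → ℝ))
    (hφreg : ContDiff ℝ 1 (fun p : ℝ × (Fin d → ℝ) => φ p.1 p.2))
    (hφ0 : ∀ x, φ 0 x = x)
    (hφode : ∀ t x, HasDerivAt (fun τ => φ τ x) (v (φ t x)) t) :
    ∀ (t : ℝ) (x : Fin d → ℝ),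
      LinearMap.det
        ((fderiv ℝ (fun y => φ t y) x : (Fin d → ℝ) →L[ℝ] (Fin d → ℝ)) :
          (Fin d → ℝ) →ₗ[ℝ] (Fin d → ℝ)) = 1 := by
  intro t x
  let A : ℝ → (Fin d → ℝ) →L[ℝ] (Fin d → ℝ) := fun s => fderiv ℝ (fun y => φ s y) x
  have hA : ∀ s, HasDerivAt A ((fderiv ℝ v (φ s x)).comp (A s)) s :=
    aux_variational d v hv φ hφreg hφ0 hφode x
  let M : ℝ → Fin d → Fin d → ℝ := fun s => LinearMap.toMatrix' (A s : (Fin d → ℝ) →ₗ[ℝ] (Fin d → ℝ))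
  have hdet : ∀ s, LinearMap.det (A s : (Fin d → ℝ) →ₗ[ℝ] (Fin d → ℝ)) = Matrix.det (Matrix.of (M s)) :=
    fun s => (LinearMap.det_toMatrix' _).symm
  have hder : ∀ s, HasDerivAt (fun s => Matrix.det (Matrix.of (M s))) 0 s := by
    intro s
    let B := LinearMap.toMatrix' (fderiv ℝ v (φ s x) : (Fin d → ℝ) →ₗ[ℝ] (Fin d → ℝ))
    have hB : B.trace = 0 := by
      rw [← hdiv (φ s x)]; rw [LinearMap.trace_eq_matrix_trace ℝ (Pi.basisFun ℝ (Fin d)), LinearMap.toMatrix_eq_toMatrix']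
    have h := aux_det_deriv d M B s ?_
    · rwa [hB, zero_mul] at h
    · rw [hasDerivAt_pi]
      intro i
      rw [hasDerivAt_pi]
      intro j
      have h1 := hasDerivAt_pi.1 ((hA s).clm_apply (hasDerivAt_const s (Pi.single j (1:ℝ)))) i
      have e : ((fderiv ℝ v (φ s x)).comp (A s)) (Pi.single j 1) i = ∑ k, B i k * M s k j := by
        have := congrFun (congrFun (LinearMap.toMatrix'_comp
          (fderiv ℝ v (φ s x) : (Fin d → ℝ) →ₗ[ℝ] (Fin d → ℝ))
          (A s : (Fin d → ℝ) →ₗ[ℝ] (Fin d → ℝ))) i) j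
        rw [Matrix.mul_apply] at this
        rw [← this, LinearMap.toMatrix'_apply]
        rfl
      rw [← e]
      convert h1 using 1
      · funext r
        exact LinearMap.toMatrix'_apply _ _ _
      · simp
  have hconst := is_const_of_deriv_eq_zero (fun s => (hder s).differentiableAt)
    (fun s => (hder s).deriv) t 0
  change LinearMap.det (A t : (Fin d → ℝ) →ₗ[ℝ] (Fin d → ℝ)) = 1
  rw [hdet, hconst, ← hdet]
  have : A 0 = ContinuousLinearMap.id ℝ _ := by
    simp only [A, hφ0]
    exact fderiv_fun_id
  rw [this]
  simp
end

section
/- Let ε > 0, T ≥ 0, and let H : ℝ → ℝ be continuous on [0, T]. Assume that for every t ∈ [0, T], H(t) ≤ e^{−t/ε} H(0) + (1 − e^{−t/ε}) · sup_{0 ≤ s ≤ t} H(s). Then H(t) ≤ H(0) for every t ∈ [0, T]. -/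
open Set

/-- If a continuous function `H` on `[0, T]` satisfies
`H(t) ≤ e^{-t/ε} H(0) + (1 - e^{-t/ε}) sup_{0 ≤ s ≤ t} H(s)` for every `t ∈ [0, T]`,
then `H(t) ≤ H(0)` on `[0, T]`. -/
theorem sup_exp_gronwall (ε T : ℝ) (hε : 0 < ε) (hT : 0 ≤ T)
    (H : ℝ → ℝ) (hcont : ContinuousOn H (Icc 0 T))
    (hineq : ∀ t ∈ Icc 0 T,
      H t ≤ Real.exp (-t / ε) * H 0 + (1 - Real.exp (-t / ε)) * sSup (H '' Icc 0 t)) :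
    ∀ t ∈ Icc 0 T, H t ≤ H 0 := by
  obtain ⟨m, hm, hmax⟩ := isCompact_Icc.exists_isMaxOn (nonempty_Icc.2 hT) hcont
  have hsup : sSup (H '' Icc 0 m) ≤ H m := by
    apply csSup_le ((nonempty_Icc.2 hm.1).image H)
    rintro _ ⟨s, hs, rfl⟩
    exact hmax (show s ∈ Icc 0 T from ⟨hs.1, hs.2.trans hm.2⟩)
  have h1 := hineq m hm
  have ha : 0 < Real.exp (-m / ε) := Real.exp_pos _
  have hb : Real.exp (-m / ε) ≤ 1 := by
    apply Real.exp_le_one_iff.2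
    exact div_nonpos_of_nonpos_of_nonneg (neg_nonpos.2 hm.1) hε.le
  have h2 := mul_le_mul_of_nonneg_left hsup (sub_nonneg.2 hb)
  have h3 : H m ≤ H 0 := by
    refine le_of_mul_le_mul_left ?_ ha
    linarith
  intro t ht
  exact (hmax ht : H t ≤ H m).trans h3
end
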